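/- Suppose the Stochastic Dynamical System generated by μ satisfies conditions (R) and (U). Let ν₁ and ν₂ be two ergodic invariant Radon measures such that supp ν₁ ⊆ supp ν₂ and supp ν₁ is not a discrete subset of ℝ (i.e., supp ν₁ has an accumulation point). Then there exists a constant C > 0 such that ν₁ = C·ν₂. -/

import Mathlib

open MeasureTheory Filter Set Function Topology
open scoped ENNReal NNReal

section SDS

variable {ι : Type*}

/-- An orientation-preserving homeomorphism of `ℝ`, modeled as a strictly increasing
surjection (such a map is automatically a homeomorphism of `ℝ`). -/
def IsOPH (g : ℝ → ℝ) : Prop := StrictMono g ∧ Function.Surjective g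

/-- The Markov chain `X_n^x = g_{ω (n-1)} ∘ ⋯ ∘ g_{ω 0} (x)` driven by the sequence `ω`. -/
def chain (G : ι → ℝ → ℝ) (ω : ℕ → ι) (x : ℝ) : ℕ → ℝ
  | 0 => x
  | n + 1 => G (ω n) (chain G ω x n)

/-- Composition `G l₀ ∘ G l₁ ∘ ⋯` along a list `l`. -/
def comps (G : ι → ℝ → ℝ) (l : List ι) : ℝ → ℝ := l.foldr (fun i f => G i ∘ f) id

/-- The semigroup `Γ*` generated by the maps `G i` under composition. -/
def sgen (G : ι → ℝ → ℝ) : Set (ℝ → ℝ) := {f | ∃ l : List ι, l ≠ [] ∧ f = comps G l}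

variable [MeasurableSpace ι]

/-- `Q` is the product measure `μm^{⊗ℕ}` on `ι^ℕ` (for a discrete base measure `μm`
this property characterizes the product measure). -/
def IsProd (μm : Measure ι) (Q : Measure (ℕ → ι)) : Prop :=
  ∀ (n : ℕ) (c : ℕ → ι),
    Q {ω : ℕ → ι | ∀ k < n, ω k = c k} = ∏ k ∈ Finset.range n, μm {c k}

/-- A Radon measure on `ℝ`: a Borel measure which is finite on compact sets. -/
def IsRadon (ν : Measure ℝ) : Prop := ∀ K : Set ℝ, IsCompact K → ν K < ⊤

/-- Invariance of `ν` for the system generated by the discrete measure `μm` on the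
maps `G i`:  `∫ f dν = Σ_g μ(g) ∫ f(g x) dν(x)` for every continuous compactly
supported `f`. -/
def IsInv (G : ι → ℝ → ℝ) (μm : Measure ι) (ν : Measure ℝ) : Prop :=
  ∀ f : ℝ → ℝ, Continuous f → HasCompactSupport f →
    ∫ x, f x ∂ν = ∑' i : ι, (μm {i}).toReal * ∫ x, f (G i x) ∂ν

/-- Ergodicity: `ν` is invariant and any Borel set whose restriction is again invariant
is either null or conull. -/
def IsErg (G : ι → ℝ → ℝ) (μm : Measure ι) (ν : Measure ℝ) : Prop :=
  IsInv G μm ν ∧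
    ∀ A : Set ℝ, MeasurableSet A → IsInv G μm (ν.restrict A) → ν A = 0 ∨ ν Aᶜ = 0

/-- The support of a measure: points all of whose open neighbourhoods have positive
measure. -/
def msupp (ν : Measure ℝ) : Set ℝ := {x | ∀ U : Set ℝ, IsOpen U → x ∈ U → 0 < ν U}

/-- Condition (R): there is a compact interval visited infinitely often, a.s., from any
starting point. -/
def CondR (G : ι → ℝ → ℝ) (Q : Measure (ℕ → ι)) : Prop :=
  ∃ a b : ℝ, a ≤ b ∧ ∀ x : ℝ, ∀ᵐ ω ∂Q, ∃ᶠ n in atTop, chain G ω x n ∈ Icc a b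

/-- Condition (C): there is an interval `I` such that any compact set can be mapped
into `I` by an element of the semigroup `Γ*`. -/
def CondC (G : ι → ℝ → ℝ) : Prop :=
  ∃ a b : ℝ, ∀ K : Set ℝ, IsCompact K → ∃ g ∈ sgen G, g '' K ⊆ Icc a b

/-- Condition (U): from any point one can move both up and down. -/
def CondU (G : ι → ℝ → ℝ) : Prop :=
  ∀ x : ℝ, ∃ i j : ι, G i x < x ∧ x < G j x

end SDS


set_option linter.unusedSectionVars false
set_option linter.unusedVariables false

namespace SDSProof

theorem oph_cont {g : ℝ → ℝ} (h : IsOPH g) : Continuous g :=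
  h.1.monotone.continuous_of_surjective h.2

section A
variable {ι : Type*} [Countable ι] {G : ι → ℝ → ℝ} {p : ι → ℝ≥0∞}

/-- Transition operator with weights `p`. -/
noncomputable def Pop (G : ι → ℝ → ℝ) (p : ι → ℝ≥0∞) (f : ℝ → ℝ≥0∞) : ℝ → ℝ≥0∞ :=
  fun x => ∑' i, p i * f (G i x)

/-- Action on measures. -/
noncomputable def TT (G : ι → ℝ → ℝ) (p : ι → ℝ≥0∞) (ν : Measure ℝ) : Measure ℝ :=
  Measure.sum fun i => p i • ν.map (G i)

/-- Partial potential. -/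
noncomputable def UU (G : ι → ℝ → ℝ) (p : ι → ℝ≥0∞) : ℕ → (ℝ → ℝ≥0∞) → ℝ → ℝ≥0∞
  | 0, _ => 0
  | n + 1, f => fun x => f x + Pop G p (UU G p n f) x

theorem Pop_meas (hG : ∀ i, IsOPH (G i)) {f : ℝ → ℝ≥0∞} (hf : Measurable f) :
    Measurable (Pop G p f) := by
  unfold Pop
  refine Measurable.tsum fun i => ?_
  exact (hf.comp (oph_cont (hG i)).measurable).const_mul _

theorem UU_meas (hG : ∀ i, IsOPH (G i)) {f : ℝ → ℝ≥0∞} (hf : Measurable f) (n : ℕ) :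
    Measurable (UU G p n f) := by
  induction n with
  | zero => exact measurable_const
  | succ n ih => exact hf.add (Pop_meas hG ih)

theorem lint_TT (hG : ∀ i, IsOPH (G i)) {f : ℝ → ℝ≥0∞} (hf : Measurable f) (ν : Measure ℝ) :
    ∫⁻ x, f x ∂(TT G p ν) = ∫⁻ x, Pop G p f x ∂ν := by
  unfold TT Pop
  rw [lintegral_sum_measure, lintegral_tsum]
  · congr 1; ext i
    rw [lintegral_smul_measure, lintegral_map hf (oph_cont (hG i)).measurable,
      lintegral_const_mul _ (f := fun a => f (G i a)) (hf.comp (oph_cont (hG i)).measurable),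
      smul_eq_mul]
  · intro i
    exact ((hf.comp (oph_cont (hG i)).measurable).const_mul _).aemeasurable

theorem TT_apply (hG : ∀ i, IsOPH (G i)) {s : Set ℝ} (hs : MeasurableSet s) (ν : Measure ℝ) :
    TT G p ν s = ∑' i, p i * ν (G i ⁻¹' s) := by
  unfold TT
  rw [Measure.sum_apply _ hs]
  congr 1; ext i
  rw [Measure.smul_apply, Measure.map_apply (oph_cont (hG i)).measurable hs, smul_eq_mul]

theorem TT_mono (hG : ∀ i, IsOPH (G i)) {ν ν' : Measure ℝ} (h : ν ≤ ν') :
    TT G p ν ≤ TT G p ν' := by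
  refine Measure.le_iff.2 fun s hs => ?_
  rw [TT_apply hG hs, TT_apply hG hs]
  exact ENNReal.tsum_le_tsum fun i => mul_le_mul_right (h _) _

theorem TT_smul (hG : ∀ i, IsOPH (G i)) {ν : Measure ℝ} (c : ℝ≥0∞) :
    TT G p (c • ν) = c • TT G p ν := by
  refine Measure.ext fun s hs => ?_
  rw [Measure.smul_apply, TT_apply hG hs, TT_apply hG hs, smul_eq_mul, ← ENNReal.tsum_mul_left]
  congr 1; ext i
  rw [Measure.smul_apply, smul_eq_mul]; ring

theorem Pop_mono {f g : ℝ → ℝ≥0∞} (h : ∀ x, f x ≤ g x) (x : ℝ) : Pop G p f x ≤ Pop G p g x :=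
  ENNReal.tsum_le_tsum fun i => mul_le_mul_right (h _) _

theorem UU_mono {f g : ℝ → ℝ≥0∞} (h : ∀ x, f x ≤ g x) (n : ℕ) (x : ℝ) :
    UU G p n f x ≤ UU G p n g x := by
  induction n generalizing x with
  | zero => exact le_rfl
  | succ n ih => exact add_le_add (h x) (Pop_mono ih x)

theorem UU_succ_le (f : ℝ → ℝ≥0∞) (n : ℕ) (x : ℝ) : UU G p n f x ≤ UU G p (n+1) f x := by
  induction n generalizing x with
  | zero => exact zero_le
  | succ n ih => exact add_le_add le_rfl (Pop_mono ih x)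

theorem UU_monotone (f : ℝ → ℝ≥0∞) (x : ℝ) : Monotone fun n => UU G p n f x :=
  monotone_nat_of_le_succ fun n => UU_succ_le f n x

theorem Pop_add (f g : ℝ → ℝ≥0∞) (x : ℝ) :
    Pop G p (fun x => f x + g x) x = Pop G p f x + Pop G p g x := by
  simp only [Pop, mul_add, ENNReal.tsum_add]

theorem Pop_const_mul (c : ℝ≥0∞) (f : ℝ → ℝ≥0∞) (x : ℝ) :
    Pop G p (fun x => c * f x) x = c * Pop G p f x := by
  simp only [Pop, ← ENNReal.tsum_mul_left]
  congr 1; ext i; ring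

theorem Pop_tsum {κ : Type*} (f : κ → ℝ → ℝ≥0∞) (x : ℝ) :
    Pop G p (fun x => ∑' k, f k x) x = ∑' k, Pop G p (f k) x := by
  simp only [Pop, ← ENNReal.tsum_mul_left]
  exact ENNReal.tsum_comm

theorem UU_tsum {κ : Type*} (c : κ → ℝ≥0∞) (f : κ → ℝ → ℝ≥0∞) (n : ℕ) (x : ℝ) :
    UU G p n (fun x => ∑' k, c k * f k x) x = ∑' k, c k * UU G p n (f k) x := by
  induction n generalizing x with
  | zero => simp [UU]
  | succ n ih =>
    have : UU G p n (fun x => ∑' k, c k * f k x) = fun x => ∑' k, c k * UU G p n (f k) x :=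
      funext ih
    simp only [UU, this, mul_add, ENNReal.tsum_add]
    rw [Pop_tsum]
    congr 2; ext k
    rw [Pop_const_mul]

theorem UU_succ' (f : ℝ → ℝ≥0∞) (n : ℕ) (x : ℝ) :
    UU G p (n+1) f x = f x + UU G p n (Pop G p f) x := by
  induction n generalizing x with
  | zero => simp [UU, Pop]
  | succ n ih =>
    rw [UU]
    have : UU G p (n+1) f = fun x => f x + UU G p n (Pop G p f) x := funext ih
    rw [this]
    simp only [Pop_add]
    rfl

theorem Pop_iSup {f : ℕ → ℝ → ℝ≥0∞} (hf : ∀ x, Monotone fun n => f n x) (x : ℝ) :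
    Pop G p (fun x => ⨆ n, f n x) x = ⨆ n, Pop G p (f n) x := by
  simp only [Pop, ENNReal.mul_iSup]
  rw [ENNReal.tsum_eq_iSup_sum]
  simp_rw [ENNReal.tsum_eq_iSup_sum (f := fun i => p i * f _ (G i x))]
  rw [iSup_comm]
  congr 1; ext s
  rw [ENNReal.finsetSum_iSup_of_monotone]
  intro i a b hab
  exact mul_le_mul_right (hf _ hab) _

/-- excessive Radon measures are invariant under recurrence -/
theorem excessive_inv (hG : ∀ i, IsOPH (G i)) {I : Set ℝ} (hI : IsCompact I)
    (hrec : ∀ x, ⨆ n, UU G p n (I.indicator 1) x = ⊤)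
    {σ : Measure ℝ} (hσ : IsRadon σ) (hex : TT G p σ ≤ σ) : TT G p σ = σ := by
  have hIm : Measurable (I.indicator (1 : ℝ → ℝ≥0∞)) :=
    measurable_one.indicator hI.measurableSet
  have key : ∀ k : ℕ, (TT G p σ).restrict (Icc (-k : ℝ) k) = σ.restrict (Icc (-k : ℝ) k) := by
    intro k
    set K := Icc (-k : ℝ) k with hK
    have hKm : MeasurableSet K := measurableSet_Icc
    have hfin : IsFiniteMeasure ((TT G p σ).restrict K) :=
      ⟨by rw [Measure.restrict_apply_univ]; exact (hex _).trans_lt (hσ _ isCompact_Icc)⟩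
    have hle : (TT G p σ).restrict K ≤ σ.restrict K := Measure.restrict_mono le_rfl hex
    set ρ := σ.restrict K - (TT G p σ).restrict K with hρ
    have hsum : ρ + (TT G p σ).restrict K = σ.restrict K := Measure.sub_add_cancel_of_le hle
    have h1 : ρ + TT G p σ ≤ σ := by
      calc ρ + TT G p σ = ρ + ((TT G p σ).restrict K + (TT G p σ).restrict Kᶜ) := by
            rw [Measure.restrict_add_restrict_compl hKm]
        _ ≤ ρ + ((TT G p σ).restrict K + σ.restrict Kᶜ) := by
            gcongr
        _ = σ := by
            rw [← add_assoc, hsum, Measure.restrict_add_restrict_compl hKm]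
    have h2 : ∀ n (f : ℝ → ℝ≥0∞), Measurable f →
        ∫⁻ x, UU G p n f x ∂ρ ≤ ∫⁻ x, f x ∂σ := by
      intro n
      induction n with
      | zero => intro f hf; simp [UU]
      | succ n ih =>
        intro f hf
        simp_rw [UU_succ']
        rw [lintegral_add_left hf]
        calc ∫⁻ x, f x ∂ρ + ∫⁻ x, UU G p n (Pop G p f) x ∂ρ
            ≤ ∫⁻ x, f x ∂ρ + ∫⁻ x, Pop G p f x ∂σ := by
              exact add_le_add le_rfl (ih _ (Pop_meas hG hf))
          _ = ∫⁻ x, f x ∂(ρ + TT G p σ) := by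
              rw [lintegral_add_measure, lint_TT hG hf]
          _ ≤ _ := lintegral_mono' h1 le_rfl
    have h3 : ∫⁻ x, ⨆ n, UU G p n (I.indicator 1) x ∂ρ ≤ σ I := by
      rw [lintegral_iSup (fun n => UU_meas hG hIm n)
        (fun a b hab x => UU_monotone _ x hab)]
      refine iSup_le fun n => (h2 n _ hIm).trans ?_
      rw [lintegral_indicator_one hI.measurableSet]
    simp_rw [hrec] at h3
    have h4 : ρ univ = 0 := by
      by_contra h
      rw [lintegral_const, ENNReal.top_mul h] at h3
      exact absurd (hσ I hI) (not_lt.2 h3)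
    have h5 : ρ = 0 := Measure.measure_univ_eq_zero.1 h4
    rw [h5, zero_add] at hsum
    exact hsum
  have hU : (⋃ k : ℕ, Icc (-k : ℝ) k) = univ := by
    refine eq_univ_of_forall fun x => ?_
    obtain ⟨k, hk⟩ := exists_nat_ge |x|
    exact mem_iUnion.2 ⟨k, abs_le.1 hk⟩
  have h := (Measure.restrict_iUnion_congr (μ := TT G p σ) (ν := σ)
    (s := fun k : ℕ => Icc (-k : ℝ) k)).2 key
  rwa [hU, Measure.restrict_univ, Measure.restrict_univ] at h

end A
end SDSProof

namespace SDSProof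
section B
variable {ι : Type*} [Countable ι] {G : ι → ℝ → ℝ} {p : ι → ℝ≥0∞}

theorem UU_eq_sum (f : ℝ → ℝ≥0∞) (n : ℕ) (x : ℝ) :
    UU G p n f x = ∑ k ∈ Finset.range n, ((Pop G p)^[k] f) x := by
  induction n generalizing f with
  | zero => simp [UU]
  | succ n ih =>
    rw [UU_succ', ih, Finset.sum_range_succ']
    simp only [Function.iterate_succ_apply, Function.iterate_zero, id]
    rw [add_comm]

theorem chain_congr {ω c : ℕ → ι} {n : ℕ} (h : ∀ j < n, ω j = c j) (x : ℝ) :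
    chain G ω x n = chain G c x n := by
  induction n with
  | zero => rfl
  | succ n ih =>
    simp only [chain]
    rw [ih (fun j hj => h j (by omega)), h n (by omega)]

variable [MeasurableSpace ι]

theorem recur_claim {μm : Measure ι} {Q : Measure (ℕ → ι)} (hQ : IsProd μm Q) (s : Set ι)
    (I : Set ℝ) (x : ℝ) (k : ℕ) : ∀ (n : ℕ) (c : ℕ → ι), (∀ j < n, c j ∈ s) →
    Q {ω | (∀ j, ω j ∈ s) ∧ (∀ j < n, ω j = c j) ∧ chain G ω x (n + k) ∈ I} ≤
      (∏ j ∈ Finset.range n, μm {c j}) *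
        ((Pop G (s.indicator fun i => μm {i}))^[k] (I.indicator 1)) (chain G c x n) := by
  induction k with
  | zero =>
    intro n c hc
    simp only [Function.iterate_zero, id, add_zero]
    by_cases hI : chain G c x n ∈ I
    · rw [indicator_of_mem hI, Pi.one_apply, mul_one, ← hQ n c]
      exact measure_mono fun ω hω => hω.2.1
    · have : {ω : ℕ → ι | (∀ j, ω j ∈ s) ∧ (∀ j < n, ω j = c j) ∧ chain G ω x n ∈ I} = ∅ := by
        ext ω
        simp only [mem_setOf_eq, mem_empty_iff_false, iff_false]
        rintro ⟨_, h2, h3⟩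
        rw [chain_congr h2] at h3
        exact hI h3
      rw [this]; simp
  | succ k ih =>
    intro n c hc
    classical
    have hsub : {ω : ℕ → ι | (∀ j, ω j ∈ s) ∧ (∀ j < n, ω j = c j) ∧ chain G ω x (n + (k+1)) ∈ I} ⊆
        ⋃ i, {ω : ℕ → ι | (∀ j, ω j ∈ s) ∧ (∀ j < n+1, ω j = Function.update c n i j) ∧
          chain G ω x (n + 1 + k) ∈ I} := by
      rintro ω ⟨h1, h2, h3⟩
      refine mem_iUnion.2 ⟨ω n, h1, ?_, ?_⟩
      · intro j hj
        rcases Nat.lt_succ_iff_lt_or_eq.1 hj with h | h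
        · rw [Function.update_of_ne (by omega)]; exact h2 j h
        · subst h; simp
      · have : n + 1 + k = n + (k + 1) := by omega
        rwa [this]
    refine (measure_mono hsub).trans ((measure_iUnion_le _).trans ?_)
    rw [Function.iterate_succ_apply']
    conv_rhs => rw [Pop]
    rw [← ENNReal.tsum_mul_left]
    refine ENNReal.tsum_le_tsum fun i => ?_
    by_cases hi : i ∈ s
    · refine (ih (n+1) (Function.update c n i) ?_).trans ?_
      · intro j hj
        by_cases h : j = n
        · subst h; simpa using hi
        · rw [Function.update_of_ne h]; exact hc j (by omega)
      · rw [indicator_of_mem hi, ← mul_assoc, Finset.prod_range_succ]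
        have e1 : ∏ j ∈ Finset.range n, μm {Function.update c n i j}
            = ∏ j ∈ Finset.range n, μm {c j} := by
          refine Finset.prod_congr rfl fun j hj => ?_
          rw [Function.update_of_ne (by have := Finset.mem_range.1 hj; omega)]
        have e2 : chain G (Function.update c n i) x (n+1) = G i (chain G c x n) := by
          simp only [chain, Function.update_self]
          rw [chain_congr (c := c)]
          intro j hj
          rw [Function.update_of_ne (by omega)]
        rw [e1, e2, Function.update_self]
    · have : {ω : ℕ → ι | (∀ j, ω j ∈ s) ∧ (∀ j < n+1, ω j = Function.update c n i j) ∧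
          chain G ω x (n + 1 + k) ∈ I} = ∅ := by
        ext ω
        simp only [mem_setOf_eq, mem_empty_iff_false, iff_false]
        rintro ⟨h1, h2, h3⟩
        have := h2 n (by omega)
        rw [Function.update_self] at this
        exact hi (this ▸ h1 n)
      rw [this]; simp

theorem recur {μm : Measure ι} {Q : Measure (ℕ → ι)} (hQ : IsProd μm Q) (s : Set ι)
    (hs : Q {ω | ∀ j, ω j ∈ s} ≠ 0) (I : Set ℝ) (x : ℝ)
    (hR : ∀ᵐ ω ∂Q, ∃ᶠ n in atTop, chain G ω x n ∈ I) :
    ⨆ n, UU G (s.indicator fun i => μm {i}) n (I.indicator 1) x = ⊤ := by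
  by_contra hne
  set p := s.indicator fun i => μm {i} with hp
  have hι : Nonempty ι := by
    by_contra h
    rw [not_nonempty_iff] at h
    apply hs
    have : {ω : ℕ → ι | ∀ j, ω j ∈ s} = ∅ := by
      ext ω; exact (h.false (ω 0)).elim
    rw [this]; simp
  let c : ℕ → ι := fun _ => hι.some
  set E : ℕ → Set (ℕ → ι) := fun k => {ω | (∀ j, ω j ∈ s) ∧ chain G ω x k ∈ I}
  have hE : ∀ k, Q (E k) ≤ ((Pop G p)^[k] (I.indicator 1)) x := by
    intro k
    have := recur_claim (G := G) hQ s I x k 0 c (by simp)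
    simpa [chain] using this
  have hsum : ∑' k, Q (E k) ≠ ⊤ := by
    refine ne_top_of_le_ne_top hne ((ENNReal.tsum_le_tsum hE).trans ?_)
    rw [ENNReal.tsum_eq_iSup_nat]
    simp_rw [UU_eq_sum]
    exact le_rfl
  have h0 := measure_limsup_atTop_eq_zero hsum
  apply hs
  refine measure_mono_null (t := limsup E atTop ∪ {ω | ¬ ∃ᶠ n in atTop, chain G ω x n ∈ I}) ?_ ?_
  · intro ω hω
    by_cases h : ∃ᶠ n in atTop, chain G ω x n ∈ I
    · left
      rw [Filter.mem_limsup_iff_frequently_mem]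
      exact h.mono fun n hn => ⟨hω, hn⟩
    · exact Or.inr h
  · exact measure_union_null h0 hR

end B
end SDSProof

namespace SDSProof
section C
variable {ι : Type*} [Countable ι] {G : ι → ℝ → ℝ} [MeasurableSpace ι]

theorem oph_comp_supp {g : ℝ → ℝ} (hg : IsOPH g) {f : ℝ → ℝ} (hf : HasCompactSupport f) :
    HasCompactSupport (fun x => f (g x)) :=
  hf.comp_homeomorph (hg.1.orderIsoOfSurjective g hg.2).toHomeomorph

theorem radon_fmc {ν : Measure ℝ} (h : IsRadon ν) : IsFiniteMeasureOnCompacts ν :=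
  ⟨fun {K} hK => h K hK⟩

theorem Icc_union : (⋃ k : ℕ, Icc (-k : ℝ) k) = univ := by
  refine eq_univ_of_forall fun x => ?_
  obtain ⟨k, hk⟩ := exists_nat_ge |x|
  exact mem_iUnion.2 ⟨k, abs_le.1 hk⟩

theorem exists_Icc_pos {ν : Measure ℝ} (h : ν ≠ 0) : ∃ k : ℕ, ν (Icc (-k : ℝ) k) ≠ 0 := by
  by_contra hc
  push Not at hc
  apply h
  rw [← Measure.measure_univ_eq_zero, ← Icc_union]
  exact measure_iUnion_null hc

theorem inv_lint {μm : Measure ι} [IsProbabilityMeasure μm] (hG : ∀ i, IsOPH (G i))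
    {ν : Measure ℝ} (hν : IsRadon ν) (hinv : IsInv G μm ν) (f : ℝ → ℝ) (hf : Continuous f)
    (hfc : HasCompactSupport f) (hf0 : ∀ x, 0 ≤ f x) (hpos : ∫ x, f x ∂ν ≠ 0) :
    ∫⁻ x, ENNReal.ofReal (f x) ∂(TT G (fun i => μm {i}) ν) = ∫⁻ x, ENNReal.ofReal (f x) ∂ν := by
  have := radon_fmc hν
  have h := hinv f hf hfc
  have hs : Summable fun i => (μm {i}).toReal * ∫ x, f (G i x) ∂ν := by
    by_contra hns
    rw [tsum_eq_zero_of_not_summable hns] at h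
    exact hpos h
  have hi : ∀ i, Integrable (fun x => f (G i x)) ν := fun i =>
    (hf.comp (oph_cont (hG i))).integrable_of_hasCompactSupport (oph_comp_supp (hG i) hfc)
  rw [← ofReal_integral_eq_lintegral_ofReal (μ := ν) (hf.integrable_of_hasCompactSupport hfc)
    (ae_of_all _ hf0), h, ENNReal.ofReal_tsum_of_nonneg _ hs]
  · rw [lint_TT hG (by fun_prop)]
    unfold Pop
    rw [lintegral_tsum]
    · congr 1; ext i
      rw [lintegral_const_mul _ (by have := oph_cont (hG i); fun_prop),
        ENNReal.ofReal_mul ENNReal.toReal_nonneg,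
        ENNReal.ofReal_toReal (measure_ne_top _ _),
        ofReal_integral_eq_lintegral_ofReal (hi i) (ae_of_all _ fun x => hf0 _)]
    · intro i
      have := oph_cont (hG i)
      fun_prop
  · intro i
    exact mul_nonneg ENNReal.toReal_nonneg (integral_nonneg fun x => hf0 _)

theorem inv_TT {μm : Measure ι} [IsProbabilityMeasure μm] (hG : ∀ i, IsOPH (G i))
    {ν : Measure ℝ} (hν : IsRadon ν) (hinv : IsInv G μm ν) (h0 : ν ≠ 0) :
    TT G (fun i => μm {i}) ν = ν := by
  have := radon_fmc hν
  set τ := TT G (fun i => μm {i}) ν with hτ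
  obtain ⟨k, hk⟩ := exists_Icc_pos h0
  obtain ⟨g, hg1, -, hgc, hg01⟩ := exists_continuous_one_zero_of_isCompact
    (isCompact_Icc (a := (-k : ℝ)) (b := k)) isClosed_empty (disjoint_empty _)
  have hgi : Integrable g ν := g.continuous.integrable_of_hasCompactSupport hgc
  have hgpos : 0 < ∫ x, g x ∂ν := by
    rw [integral_pos_iff_support_of_nonneg (fun x => (hg01 x).1) hgi]
    refine lt_of_lt_of_le (pos_iff_ne_zero.2 hk) (measure_mono fun x hx => ?_)
    rw [Function.mem_support, hg1 hx]; simp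
  have hgl := inv_lint hG hν hinv g g.continuous hgc (fun x => (hg01 x).1) hgpos.ne'
  have key : ∀ f : ℝ → ℝ, Continuous f → HasCompactSupport f → (∀ x, 0 ≤ f x) →
      ∫⁻ x, ENNReal.ofReal (f x) ∂τ = ∫⁻ x, ENNReal.ofReal (f x) ∂ν := by
    intro f hf hfc hf0
    have hfi : Integrable f ν := hf.integrable_of_hasCompactSupport hfc
    have h1 := inv_lint hG hν hinv (fun x => f x + g x) (hf.add g.continuous) (hfc.add hgc)
      (fun x => add_nonneg (hf0 x) (hg01 x).1) (by
        rw [integral_add hfi hgi]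
        have : 0 ≤ ∫ x, f x ∂ν := integral_nonneg hf0
        linarith)
    simp_rw [fun x => ENNReal.ofReal_add (hf0 x) (hg01 x).1] at h1
    rw [lintegral_add_left (by fun_prop), lintegral_add_left (by fun_prop), hgl] at h1
    refine (ENNReal.add_left_inj ?_).1 h1
    rw [← ofReal_integral_eq_lintegral_ofReal hgi (ae_of_all _ fun x => (hg01 x).1)]
    exact ENNReal.ofReal_ne_top
  have : IsFiniteMeasureOnCompacts τ := by
    refine ⟨fun {K} hK => ?_⟩
    obtain ⟨f, hf1, -, hfc, hf01⟩ := exists_continuous_one_zero_of_isCompact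
      hK isClosed_empty (disjoint_empty _)
    have hfi : Integrable f ν := f.continuous.integrable_of_hasCompactSupport hfc
    calc τ K = ∫⁻ x, K.indicator 1 x ∂τ := (lintegral_indicator_one hK.measurableSet).symm
      _ ≤ ∫⁻ x, ENNReal.ofReal (f x) ∂τ := by
        refine lintegral_mono fun x => ?_
        by_cases hx : x ∈ K
        · rw [indicator_of_mem hx, hf1 hx]; simp
        · rw [indicator_of_notMem hx]; exact zero_le
      _ = ∫⁻ x, ENNReal.ofReal (f x) ∂ν := key f f.continuous hfc fun x => (hf01 x).1
      _ < ⊤ := by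
        rw [← ofReal_integral_eq_lintegral_ofReal hfi (ae_of_all _ fun x => (hf01 x).1)]
        exact ENNReal.ofReal_lt_top
  refine Measure.ext_of_integral_eq_on_compactlySupported fun f => ?_
  have hfc := f.hasCompactSupport
  have e : ∀ f : ℝ → ℝ, Continuous f → HasCompactSupport f →
      ∫⁻ x, ENNReal.ofReal (f x) ∂τ = ∫⁻ x, ENNReal.ofReal (f x) ∂ν := by
    intro f hf hfc
    have := key (fun x => max (f x) 0) (by fun_prop)
      (hfc.comp_left (g := fun t => max t 0) (by simp)) (fun x => le_max_right _ _)
    simpa using this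
  have i1 : Integrable f τ := f.continuous.integrable_of_hasCompactSupport hfc
  have i2 : Integrable f ν := f.continuous.integrable_of_hasCompactSupport hfc
  rw [integral_eq_lintegral_pos_part_sub_lintegral_neg_part i1,
    integral_eq_lintegral_pos_part_sub_lintegral_neg_part i2, e f f.continuous hfc,
    e (fun x => - f x) (by fun_prop) (hfc.comp_left (g := fun t => -t) (by simp))]

theorem TT_inv {μm : Measure ι} [IsProbabilityMeasure μm] (hG : ∀ i, IsOPH (G i))
    {ν : Measure ℝ} (hν : IsRadon ν) (hT : TT G (fun i => μm {i}) ν = ν) : IsInv G μm ν := by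
  have := radon_fmc hν
  intro f hf hfc
  have hfi : Integrable f ν := hf.integrable_of_hasCompactSupport hfc
  conv_lhs => rw [← hT]
  rw [TT, integral_sum_measure (by rw [← TT, hT]; exact hfi)]
  congr 1; ext i
  rw [integral_smul_measure, integral_map (oph_cont (hG i)).measurable.aemeasurable
    hf.aestronglyMeasurable, smul_eq_mul]

end C
end SDSProof

namespace SDSProof
section D
variable {ι : Type*} [Countable ι] {G : ι → ℝ → ℝ} [MeasurableSpace ι]

theorem satur {F : ℕ → ι → ι} (hF : ∀ k, ∀ S : Set ι, MeasurableSet S → F k ⁻¹' S = S)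
    (S : Set (ℕ → ι)) (hS : MeasurableSet S) :
    (fun (ω : ℕ → ι) k => F k (ω k)) ⁻¹' S = S := by
  let M : MeasurableSpace (ℕ → ι) :=
    { MeasurableSet' := fun S => (fun (ω : ℕ → ι) k => F k (ω k)) ⁻¹' S = S
      measurableSet_empty := by simp
      measurableSet_compl := fun S h => by rw [preimage_compl, h]
      measurableSet_iUnion := fun S h => by rw [preimage_iUnion]; simp_rw [h] }
  have hle : MeasurableSpace.pi ≤ M := by
    refine iSup_le fun k => ?_
    rintro _ ⟨T, hT, rfl⟩
    change _ ⁻¹' _ = _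
    rw [← preimage_comp]
    have : (fun ω : ℕ → ι => ω k) ∘ (fun (ω : ℕ → ι) k => F k (ω k)) = F k ∘ fun ω => ω k := rfl
    rw [this, preimage_comp, hF k T hT]
  exact hle S hS

theorem sep {μm : Measure ι} [IsProbabilityMeasure μm] (hpos : ∀ i, 0 < μm {i})
    (hG : ∀ i, IsOPH (G i)) {Q : Measure (ℕ → ι)} (hQ : IsProd μm Q) {I : Set ℝ}
    (hI : IsCompact I) (hR : ∀ x : ℝ, ∀ᵐ ω ∂Q, ∃ᶠ n in atTop, chain G ω x n ∈ I)
    {ν : Measure ℝ} (hν : IsRadon ν) (hT : TT G (fun i => μm {i}) ν = ν) (h0 : ν ≠ 0)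
    (i0 j0 : ι) (hij : i0 ≠ j0) : ∃ S : Set ι, MeasurableSet S ∧ i0 ∈ S ∧ j0 ∉ S := by
  classical
  by_contra hc
  push Not at hc
  have hc' : ∀ S : Set ι, MeasurableSet S → (i0 ∈ S ↔ j0 ∈ S) := fun S hS =>
    ⟨hc S hS, fun h => by
      by_contra h'
      exact hc Sᶜ hS.compl h' h⟩
  set s : Set ι := {j0}ᶜ with hs
  have hΩ : Q {ω | ∀ j, ω j ∈ s} ≠ 0 := by
    rw [← measure_toMeasurable]
    have hsat := satur (F := fun _ => Function.update id j0 i0) (fun _ S hS => by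
      ext i
      by_cases h : i = j0
      · subst h; simp [hc' S hS]
      · simp [Function.update_of_ne h])
      (toMeasurable Q {ω | ∀ j, ω j ∈ s}) (measurableSet_toMeasurable _ _)
    have : toMeasurable Q {ω | ∀ j, ω j ∈ s} = univ := by
      refine eq_univ_of_forall fun ω => ?_
      rw [← hsat]
      refine subset_toMeasurable _ _ fun j => ?_
      by_cases h : ω j = j0
      · simp only [h, Function.update_self, hs]; simpa using hij
      · simp only [Function.update_of_ne h, hs]; simpa using h
    rw [this]
    have h1 := hQ 0 (fun _ => i0)
    simp at h1
    rw [h1]; simp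
  have hrec := fun x => recur (G := G) hQ s hΩ I x (hR x)
  have hle : TT G (s.indicator fun i => μm {i}) ν ≤ ν := by
    conv_rhs => rw [← hT]
    refine Measure.le_iff.2 fun t ht => ?_
    rw [TT_apply hG ht, TT_apply hG ht]
    refine ENNReal.tsum_le_tsum fun i => ?_
    gcongr
    exact indicator_le_self' (fun _ _ => zero_le) i
  have heq := excessive_inv hG hI hrec hν hle
  obtain ⟨k, hk⟩ := exists_Icc_pos h0
  set A := G j0 '' Icc (-k : ℝ) k with hA
  have hAc : IsCompact A := isCompact_Icc.image (oph_cont (hG j0))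
  have hpre : G j0 ⁻¹' A = Icc (-k : ℝ) k := preimage_image_eq _ (hG j0).1.injective
  have e1 : TT G (s.indicator fun i => μm {i}) ν A + μm {j0} * ν (Icc (-k : ℝ) k) = ν A := by
    conv_rhs => rw [← hT]
    rw [TT_apply hG hAc.measurableSet, TT_apply hG hAc.measurableSet, ← hpre,
      ← tsum_ite_eq j0 (fun i => μm {i} * ν (G i ⁻¹' A)), ← ENNReal.tsum_add]
    congr 1; ext i
    by_cases h : i = j0
    · subst h; simp [hs]
    · simp [hs, h]
  rw [heq] at e1
  have : μm {j0} * ν (Icc (-k : ℝ) k) = 0 := by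
    refine (ENNReal.add_right_inj (hν A hAc).ne).1 ?_
    rw [e1, add_zero]
  rcases mul_eq_zero.1 this with h | h
  · exact (hpos j0).ne' h
  · exact hk h

theorem sum_one {μm : Measure ι} [IsProbabilityMeasure μm] (hpos : ∀ i, 0 < μm {i})
    (hG : ∀ i, IsOPH (G i)) {Q : Measure (ℕ → ι)} (hQ : IsProd μm Q) {I : Set ℝ}
    (hI : IsCompact I) (hR : ∀ x : ℝ, ∀ᵐ ω ∂Q, ∃ᶠ n in atTop, chain G ω x n ∈ I)
    {ν : Measure ℝ} (hν : IsRadon ν) (hT : TT G (fun i => μm {i}) ν = ν) (h0 : ν ≠ 0) :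
    ∑' i, μm {i} = 1 := by
  have hsep := sep hpos hG hQ hI hR hν hT h0
  choose! S hS using hsep
  have hm : ∀ i, MeasurableSet ({i} : Set ι) := by
    intro i
    have : ({i} : Set ι) = ⋂ (j : ι) (_ : i ≠ j), S i j := by
      ext k
      simp only [mem_singleton_iff, mem_iInter]
      constructor
      · rintro rfl j hj; exact (hS k j hj).2.1
      · intro h
        by_contra hk
        exact (hS i k (Ne.symm hk)).2.2 (h k (Ne.symm hk))
    rw [this]
    exact MeasurableSet.iInter fun j => MeasurableSet.iInter fun hj => (hS i j hj).1
  rw [← measure_iUnion (fun i j hij => by simpa using hij) hm]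
  have : (⋃ i : ι, ({i} : Set ι)) = univ := by ext; simp
  rw [this, measure_univ]

end D
end SDSProof

namespace SDSProof

/-- The data of the system in the form used below. -/
structure Sys {ι : Type*} (G : ι → ℝ → ℝ) (p : ι → ℝ≥0∞) (I : Set ℝ) : Prop where
  hG : ∀ i, IsOPH (G i)
  hpos : ∀ i, 0 < p i
  hsum : ∑' i, p i = 1
  hI : IsCompact I
  hrec : ∀ x, ⨆ n, UU G p n (I.indicator 1) x = ⊤

/-- Ergodic invariant Radon measure. -/
structure Erg {ι : Type*} (G : ι → ℝ → ℝ) (p : ι → ℝ≥0∞) (ν : Measure ℝ) : Prop where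
  rad : IsRadon ν
  inv : TT G p ν = ν
  erg : ∀ A, MeasurableSet A → TT G p (ν.restrict A) = ν.restrict A → ν A = 0 ∨ ν Aᶜ = 0

section E
variable {ι : Type*} [Countable ι] {G : ι → ℝ → ℝ} {p : ι → ℝ≥0∞} {I : Set ℝ}
variable {ν ν₁ ν₂ ν' : Measure ℝ}

theorem radon_le (h : IsRadon ν) (hle : ν' ≤ ν) : IsRadon ν' :=
  fun K hK => (hle K).trans_lt (h K hK)

theorem erg_fwd (hS : Sys G p I) (hν : Erg G p ν) {A : Set ℝ} (hA : MeasurableSet A)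
    (hA' : ∀ i, ν (A ∩ G i ⁻¹' Aᶜ) = 0) : ν A = 0 ∨ ν Aᶜ = 0 := by
  refine hν.erg A hA (excessive_inv hS.hG hS.hI hS.hrec
    (radon_le hν.rad Measure.restrict_le_self) ?_)
  refine Measure.le_iff.2 fun B hB => ?_
  rw [TT_apply hS.hG hB, Measure.restrict_apply hB]
  conv_rhs => rw [← hν.inv]
  rw [TT_apply hS.hG (hB.inter hA)]
  refine ENNReal.tsum_le_tsum fun i => ?_
  refine mul_le_mul_right ?_ _
  rw [Measure.restrict_apply ((oph_cont (hS.hG i)).measurable hB)]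
  calc ν (G i ⁻¹' B ∩ A) ≤ ν (G i ⁻¹' (B ∩ A) ∪ (A ∩ G i ⁻¹' Aᶜ)) := by
        refine measure_mono ?_
        rintro x ⟨h1, h2⟩
        by_cases h : G i x ∈ A
        · exact Or.inl ⟨h1, h⟩
        · exact Or.inr ⟨h2, h⟩
    _ ≤ _ := (measure_union_le _ _).trans (by rw [hA', add_zero])

theorem erg_dens_step (hS : Sys G p I) (hν : Erg G p ν) (h : ℝ → ℝ≥0∞) (hm : Measurable h)
    (hrad : IsRadon (ν.withDensity h))
    (hT : TT G p (ν.withDensity h) = ν.withDensity h) (c : ℝ≥0∞) :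
    ν {x | c < h x} = 0 ∨ ν {x | c < h x}ᶜ = 0 := by
  have hA : MeasurableSet {x | c < h x} := measurableSet_lt measurable_const hm
  refine erg_fwd hS hν hA fun i => ?_
  set A := {x | c < h x} with hAdef
  have hmm : Measurable fun x => min (h x) c := hm.min measurable_const
  set σ := ν.withDensity fun x => min (h x) c with hσ
  have hσ1 : σ ≤ ν.withDensity h := withDensity_mono (ae_of_all _ fun x => min_le_left _ _)
  have hσ2 : σ ≤ c • ν := by
    rw [← withDensity_const]
    exact withDensity_mono (ae_of_all _ fun x => min_le_right _ _)
  have hσr : IsRadon σ := radon_le hrad hσ1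
  have hex : TT G p σ ≤ σ := by
    refine Measure.le_iff.2 fun B hB => ?_
    rw [← measure_inter_add_sdiff (μ := TT G p σ) B hA, ← measure_inter_add_sdiff (μ := σ) B hA]
    refine add_le_add ?_ ?_
    · calc TT G p σ (B ∩ A) ≤ TT G p (c • ν) (B ∩ A) := TT_mono hS.hG hσ2 _
        _ = c * ν (B ∩ A) := by rw [TT_smul hS.hG, hν.inv]; rfl
        _ = σ (B ∩ A) := by
          rw [hσ, withDensity_apply _ (hB.inter hA), ← setLIntegral_const]
          refine setLIntegral_congr_fun (hB.inter hA) fun x hx => ?_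
          exact (min_eq_right (le_of_lt hx.2)).symm
    · calc TT G p σ (B \ A) ≤ TT G p (ν.withDensity h) (B \ A) := TT_mono hS.hG hσ1 _
        _ = ν.withDensity h (B \ A) := by rw [hT]
        _ = σ (B \ A) := by
          rw [hσ, withDensity_apply _ (hB.diff hA), withDensity_apply _ (hB.diff hA)]
          refine setLIntegral_congr_fun (hB.diff hA) fun x hx => ?_
          exact (min_eq_left (not_lt.1 hx.2)).symm
  have hσT := excessive_inv hS.hG hS.hI hS.hrec hσr hex
  have hk : ∀ k : ℕ, ν (A ∩ G i ⁻¹' (Aᶜ ∩ Icc (-k : ℝ) k)) = 0 := by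
    intro k
    set B := Aᶜ ∩ Icc (-k : ℝ) k
    have hB : MeasurableSet B := hA.compl.inter measurableSet_Icc
    have hBf : σ B ≠ ⊤ := ((measure_mono inter_subset_right).trans_lt (hσr _ isCompact_Icc)).ne
    have e1 : σ B = ν.withDensity h B := by
      rw [hσ, withDensity_apply _ hB, withDensity_apply _ hB]
      exact setLIntegral_congr_fun hB fun x hx => min_eq_left (not_lt.1 hx.1)
    have e2 : σ (G i ⁻¹' B) = ν.withDensity h (G i ⁻¹' B) := by
      by_contra hne
      have hlt := lt_of_le_of_ne (hσ1 (G i ⁻¹' B)) hne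
      have hpt : p i ≠ ⊤ := by
        intro h
        have := ENNReal.le_tsum (f := p) i
        rw [hS.hsum, h] at this
        simp at this
      have : TT G p σ B < TT G p (ν.withDensity h) B := by
        rw [TT_apply hS.hG hB, TT_apply hS.hG hB]
        refine ENNReal.tsum_lt_tsum (i := i) ?_ (fun j => ?_) ?_
        · rw [← TT_apply hS.hG hB, hσT]; exact hBf
        · gcongr
        · exact ENNReal.mul_lt_mul_right (hS.hpos i).ne' hpt hlt
      rw [hσT, hT, e1] at this
      exact lt_irrefl _ this
    have hX : MeasurableSet (G i ⁻¹' B) := (oph_cont (hS.hG i)).measurable hB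
    have hXf : σ (G i ⁻¹' B) ≠ ⊤ := by
      intro htop
      apply hBf
      rw [← hσT, TT_apply hS.hG hB]
      refine top_le_iff.1 (le_trans ?_ (ENNReal.le_tsum i))
      rw [htop, ENNReal.mul_top (hS.hpos i).ne']
    have := ae_eq_of_ae_le_of_lintegral_le (μ := ν.restrict (G i ⁻¹' B))
      (f := fun x => min (h x) c) (g := h) (ae_of_all _ fun x => min_le_left _ _)
      (by rw [← withDensity_apply _ hX]; exact hXf) hm.aemeasurable
      (by rw [← withDensity_apply _ hX, ← withDensity_apply _ hX]; exact e2.ge)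
    have h2 : ν.restrict (G i ⁻¹' B) A = 0 := by
      refine measure_mono_null ?_ this
      intro x hx hx'
      have hx2 : c < h x := hx
      have hx' : min (h x) c = h x := hx'
      rw [min_eq_right hx2.le] at hx'
      exact hx2.ne hx'
    rwa [Measure.restrict_apply hA] at h2
  have : A ∩ G i ⁻¹' Aᶜ ⊆ ⋃ k : ℕ, A ∩ G i ⁻¹' (Aᶜ ∩ Icc (-k : ℝ) k) := by
    rintro x ⟨h1, h2⟩
    have : G i x ∈ ⋃ k : ℕ, Icc (-k : ℝ) k := by rw [Icc_union]; trivial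
    obtain ⟨k, hk⟩ := mem_iUnion.1 this
    exact mem_iUnion.2 ⟨k, h1, h2, hk⟩
  exact measure_mono_null this (measure_iUnion_null hk)

theorem ae_const_of (h : ℝ → ℝ≥0∞) (H : ∀ c, ν {x | c < h x} = 0 ∨ ν {x | c < h x}ᶜ = 0) :
    ∃ a, h =ᵐ[ν] fun _ => a := by
  classical
  set a := sInf {c | ν {x | c < h x} = 0} with ha
  refine ⟨a, ?_⟩
  let q' : ℚ → ℝ≥0∞ := fun q => ((q : ℝ).toNNReal : ℝ≥0∞)
  let N : ℚ → Set ℝ := fun q => if ν {x | q' q < h x} = 0 then {x | q' q < h x}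
    else {x | q' q < h x}ᶜ
  have hN : ∀ q, ν (N q) = 0 := by
    intro q
    by_cases hq : ν {x | q' q < h x} = 0
    · simp only [N, if_pos hq]; exact hq
    · simp only [N, if_neg hq]; exact (H _).resolve_left hq
  refine measure_mono_null ?_ (measure_iUnion_null hN)
  intro x hx
  have hx : h x ≠ a := hx
  rcases lt_or_gt_of_ne hx with hlt | hgt
  · obtain ⟨q, -, h1, h2⟩ := ENNReal.lt_iff_exists_rat_btwn.1 hlt
    refine mem_iUnion.2 ⟨q, ?_⟩
    have hq : ¬ ν {x | q' q < h x} = 0 := fun h0 =>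
      absurd (sInf_le (show q' q ∈ {c | ν {x | c < h x} = 0} from h0)) (not_le.2 h2)
    simp only [N, if_neg hq]
    exact not_lt.2 h1.le
  · obtain ⟨q, -, h1, h2⟩ := ENNReal.lt_iff_exists_rat_btwn.1 hgt
    refine mem_iUnion.2 ⟨q, ?_⟩
    obtain ⟨c, hc, hcq⟩ := sInf_lt_iff.1 h1
    have hc : ν {x | c < h x} = 0 := hc
    have hq : ν {x | q' q < h x} = 0 :=
      measure_mono_null (fun y (hy : q' q < h y) => hcq.trans hy) hc
    simp only [N, if_pos hq]
    exact h2

theorem erg_le (hS : Sys G p I) (hν : Erg G p ν) (hle : ν' ≤ ν) (hT : TT G p ν' = ν') :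
    ∃ a : ℝ≥0∞, ν' = a • ν := by
  have := radon_fmc hν.rad
  have := radon_fmc (radon_le hν.rad hle)
  have e : ν.withDensity (ν'.rnDeriv ν) = ν' :=
    Measure.withDensity_rnDeriv_eq _ _ (Measure.absolutelyContinuous_of_le hle)
  obtain ⟨a, ha⟩ := ae_const_of (ν := ν) (ν'.rnDeriv ν)
    (erg_dens_step hS hν _ (Measure.measurable_rnDeriv _ _)
    (by rw [e]; exact radon_le hν.rad hle) (by rw [e]; exact hT))
  refine ⟨a, ?_⟩
  rw [← e, withDensity_congr_ae ha, withDensity_const]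

theorem smul_ne_top {a : ℝ≥0∞} (h0 : ν ≠ 0) (h : IsRadon (a • ν)) : a ≠ ⊤ := by
  rintro rfl
  obtain ⟨k, hk⟩ := exists_Icc_pos h0
  have := h _ (isCompact_Icc (a := (-k : ℝ)) (b := k))
  rw [Measure.smul_apply, smul_eq_mul, ENNReal.top_mul hk] at this
  exact lt_irrefl _ this

theorem prop_or_sing (hS : Sys G p I) (h1 : Erg G p ν₁) (h2 : Erg G p ν₂) (h10 : ν₁ ≠ 0)
    (h20 : ν₂ ≠ 0) : (∃ C : ℝ≥0, 0 < C ∧ ν₁ = C • ν₂) ∨ ν₁ ⟂ₘ ν₂ := by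
  have hex : TT G p (ν₁ ⊓ ν₂) ≤ ν₁ ⊓ ν₂ := by
    refine le_inf ?_ ?_
    · conv_rhs => rw [← h1.inv]
      exact TT_mono hS.hG inf_le_left
    · conv_rhs => rw [← h2.inv]
      exact TT_mono hS.hG inf_le_right
  have hr : IsRadon (ν₁ ⊓ ν₂) := radon_le h1.rad inf_le_left
  have hT := excessive_inv hS.hG hS.hI hS.hrec hr hex
  by_cases h0 : ν₁ ⊓ ν₂ = 0
  · right
    rw [Measure.mutuallySingular_iff_disjoint, disjoint_iff]
    exact h0
  left
  obtain ⟨a, ha⟩ := erg_le hS h1 inf_le_left hT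
  obtain ⟨b, hb⟩ := erg_le hS h2 inf_le_right hT
  have ha0 : a ≠ 0 := by rintro rfl; rw [zero_smul] at ha; exact h0 ha
  have hb0 : b ≠ 0 := by rintro rfl; rw [zero_smul] at hb; exact h0 hb
  have hat : a ≠ ⊤ := smul_ne_top h10 (ha ▸ hr)
  have hbt : b ≠ ⊤ := smul_ne_top h20 (hb ▸ hr)
  lift a to ℝ≥0 using hat
  lift b to ℝ≥0 using hbt
  have ha0' : a ≠ 0 := by simpa using ha0
  have hb0' : b ≠ 0 := by simpa using hb0
  refine ⟨a⁻¹ * b, by positivity, ?_⟩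
  have e : a • ν₁ = b • ν₂ := ha.symm.trans hb
  rw [mul_smul, ← e, smul_smul, inv_mul_cancel₀ ha0', one_smul]

theorem TT_count (hS : Sys G p I) : TT G p Measure.count = Measure.count := by
  refine Measure.ext fun B hB => ?_
  rw [TT_apply hS.hG hB]
  have : ∀ i, Measure.count (G i ⁻¹' B) = Measure.count B := by
    intro i
    rw [Measure.count_apply hB, Measure.count_apply ((oph_cont (hS.hG i)).measurable hB),
      Set.encard_preimage_of_bijective ⟨(hS.hG i).1.injective, (hS.hG i).2⟩]
  simp_rw [this]
  rw [ENNReal.tsum_mul_right, hS.hsum, one_mul]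

theorem atom_le (hS : Sys G p I) (hν : Erg G p ν) {x₀ : ℝ} (hx : ν {x₀} ≠ 0) (x : ℝ) :
    ν {x} ≤ ν {x₀} := by
  set w := ν {x₀} with hw
  have hwt : w ≠ ⊤ := (hν.rad _ isCompact_singleton).ne
  have hex : TT G p ((w • Measure.count) ⊓ ν) ≤ (w • Measure.count) ⊓ ν := by
    refine le_inf ?_ ?_
    · refine (TT_mono hS.hG inf_le_left).trans ?_
      rw [TT_smul hS.hG, TT_count hS]
    · conv_rhs => rw [← hν.inv]
      exact TT_mono hS.hG inf_le_right
  have hr : IsRadon ((w • Measure.count) ⊓ ν) := radon_le hν.rad inf_le_right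
  obtain ⟨a, ha⟩ := erg_le hS hν inf_le_right (excessive_inv hS.hG hS.hI hS.hrec hr hex)
  have h1 : ν.restrict {x₀} ≤ (w • Measure.count) ⊓ ν := by
    refine le_inf ?_ Measure.restrict_le_self
    rw [Measure.restrict_singleton]
    refine Measure.le_iff.2 fun s hs => ?_
    rw [Measure.smul_apply, Measure.smul_apply]
    rw [smul_eq_mul, smul_eq_mul]
    refine mul_le_mul_right ?_ _
    rw [Measure.dirac_apply' _ hs]
    by_cases h : x₀ ∈ s
    · rw [indicator_of_mem h, Pi.one_apply, ← Measure.count_singleton x₀]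
      exact measure_mono (by simpa using h)
    · rw [indicator_of_notMem h]; exact zero_le
  have h2 : w ≤ a * w := by
    have := h1 {x₀}
    rw [ha, Measure.restrict_apply_self, Measure.smul_apply, smul_eq_mul] at this
    exact this
  have h3 : 1 ≤ a := by
    by_contra hlt
    rw [not_le] at hlt
    have := ENNReal.mul_lt_mul_left hx hwt hlt
    rw [one_mul] at this
    exact absurd h2 (not_le.2 this)
  calc ν {x} = 1 * ν {x} := (one_mul _).symm
    _ ≤ a * ν {x} := by gcongr
    _ = ((w • Measure.count) ⊓ ν) {x} := by rw [ha]; rfl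
    _ ≤ (w • Measure.count) {x} := (inf_le_left : (w • Measure.count) ⊓ ν ≤ _) _
    _ = w := by rw [Measure.smul_apply, Measure.count_singleton, smul_eq_mul, mul_one]

theorem atomless (hS : Sys G p I) (hν : Erg G p ν) (hacc : ∃ x : ℝ, AccPt x (𝓟 (msupp ν)))
    (x₀ : ℝ) : ν {x₀} = 0 := by
  by_contra hx
  set D := {x | ν {x} ≠ 0} with hD
  have hge : ∀ x ∈ D, ν {x₀} ≤ ν {x} := fun x hxD => atom_le hS hν hxD x₀
  have hfin : ∀ K, IsCompact K → (D ∩ K).Finite := by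
    intro K hK
    by_contra hinf
    have := Set.Infinite.meas_eq_top (μ := ν) hinf ⟨ν {x₀}, hx, fun x h => hge x h.1⟩
    exact absurd ((measure_mono inter_subset_right).trans_lt (hν.rad K hK)) (by rw [this]; simp)
  have hDm : MeasurableSet D := by
    have : D = ⋃ k : ℕ, D ∩ Icc (-k : ℝ) k := by rw [← inter_iUnion, Icc_union, inter_univ]
    rw [this]
    exact MeasurableSet.iUnion fun k => (hfin _ isCompact_Icc).measurableSet
  have hDc : ν Dᶜ = 0 := by
    refine (erg_fwd hS hν hDm fun i => ?_).resolve_left ?_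
    · have : D ∩ G i ⁻¹' Dᶜ = ∅ := by
        ext x
        simp only [mem_inter_iff, mem_empty_iff_false, iff_false, not_and]
        intro h1 h2
        apply h2
        change ν {G i x} ≠ 0
        rw [← hν.inv, TT_apply hS.hG (measurableSet_singleton _)]
        intro h0
        have h3 := ENNReal.tsum_eq_zero.1 h0 i
        rcases mul_eq_zero.1 h3 with h | h
        · exact (hS.hpos i).ne' h
        · exact h1 (measure_mono_null (by simp) h)
      rw [this]; simp
    · intro h
      exact hx (measure_mono_null (by simpa [hD] using hx) h)
  obtain ⟨z, hz⟩ := hacc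
  set F := (D ∩ Icc (z-1) (z+1)) \ {z} with hF
  have hFf : F.Finite := (hfin _ isCompact_Icc).sdiff
  have hUo : IsOpen (Ioo (z-1) (z+1) \ F) := isOpen_Ioo.sdiff hFf.isClosed
  have hzU : z ∈ Ioo (z-1) (z+1) \ F := ⟨⟨by linarith, by linarith⟩, fun h => h.2 rfl⟩
  obtain ⟨y, ⟨hyU, hys⟩, hyz⟩ := accPt_iff_nhds.1 hz _ (hUo.mem_nhds hzU)
  have := hys ((Ioo (z-1) (z+1) \ F) \ {z}) (hUo.sdiff isClosed_singleton) ⟨hyU, hyz⟩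
  refine this.ne' (measure_mono_null ?_ hDc)
  rintro x ⟨⟨h1, h2⟩, h3⟩ hxD
  exact h2 ⟨⟨hxD, h1.1.le, h1.2.le⟩, h3⟩

end E
end SDSProof

namespace SDSProof
section F
variable {ι : Type*} [Countable ι] {G : ι → ℝ → ℝ} {p : ι → ℝ≥0∞} {I : Set ℝ}
variable {ν : Measure ℝ}

/-- Truncated ballayage sequence. -/
noncomputable def HH (G : ι → ℝ → ℝ) (p : ι → ℝ≥0∞) (f g : ℝ → ℝ≥0∞) : ℕ → ℝ → ℝ≥0∞
  | 0 => fun _ => 0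
  | n + 1 => fun x => (f x + Pop G p (HH G p f g n) x) - g x

theorem HH_meas (hG : ∀ i, IsOPH (G i)) {f g : ℝ → ℝ≥0∞} (hf : Measurable f) (hg : Measurable g)
    (n : ℕ) : Measurable (HH G p f g n) := by
  induction n with
  | zero => exact measurable_const
  | succ n ih => exact (hf.add (Pop_meas hG ih)).sub hg

theorem HH_succ_le (f g : ℝ → ℝ≥0∞) (n : ℕ) (x : ℝ) : HH G p f g n x ≤ HH G p f g (n+1) x := by
  induction n generalizing x with
  | zero => exact zero_le
  | succ n ih => exact tsub_le_tsub_right (add_le_add le_rfl (Pop_mono ih x)) _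

theorem HH_mono (f g : ℝ → ℝ≥0∞) (x : ℝ) : Monotone fun n => HH G p f g n x :=
  monotone_nat_of_le_succ fun n => HH_succ_le f g n x

theorem UU_le_HH (f g : ℝ → ℝ≥0∞) (n : ℕ) (x : ℝ) :
    UU G p n f x ≤ UU G p n g x + HH G p f g n x := by
  induction n generalizing x with
  | zero => exact zero_le
  | succ n ih =>
    calc f x + Pop G p (UU G p n f) x
        ≤ f x + (Pop G p (UU G p n g) x + Pop G p (HH G p f g n) x) := by
          rw [← Pop_add]
          exact add_le_add le_rfl (Pop_mono ih x)
      _ = (f x + Pop G p (HH G p f g n) x) + Pop G p (UU G p n g) x := by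
          rw [add_comm (Pop G p (UU G p n g) x), add_assoc]
      _ ≤ (HH G p f g (n+1) x + g x) + Pop G p (UU G p n g) x :=
          add_le_add le_tsub_add le_rfl
      _ = UU G p (n+1) g x + HH G p f g (n+1) x := by
          rw [UU]; ring

theorem HH_fin (hG : ∀ i, IsOPH (G i)) (hT : TT G p ν = ν) {f g : ℝ → ℝ≥0∞} (hf : Measurable f)
    (hg : Measurable g) (hfi : ∫⁻ x, f x ∂ν ≠ ⊤) (n : ℕ) : ∫⁻ x, HH G p f g n x ∂ν ≠ ⊤ := by
  induction n with
  | zero => simp [HH]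
  | succ n ih =>
    refine ne_top_of_le_ne_top (b := ∫⁻ x, f x + Pop G p (HH G p f g n) x ∂ν) ?_
      (lintegral_mono fun x => tsub_le_self)
    rw [lintegral_add_left hf, ← lint_TT hG (HH_meas hG hf hg n), hT]
    exact ENNReal.add_ne_top.2 ⟨hfi, ih⟩

theorem HH_step (hG : ∀ i, IsOPH (G i)) (hT : TT G p ν = ν) {f g : ℝ → ℝ≥0∞} (hf : Measurable f)
    (hg : Measurable g) (hfi : ∫⁻ x, f x ∂ν ≠ ⊤) (n : ℕ) :
    ∫⁻ x in {x | 0 < HH G p f g (n+1) x}, g x ∂ν ≤ ∫⁻ x, f x ∂ν := by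
  have hm := HH_meas (p := p) hG hf hg
  have hE : MeasurableSet {x | 0 < HH G p f g (n+1) x} := measurableSet_lt measurable_const (hm _)
  have hfin := HH_fin hG hT hf hg hfi (n+1)
  set E := {x | 0 < HH G p f g (n+1) x} with hEd
  have h1 : ∫⁻ x in E, HH G p f g (n+1) x ∂ν = ∫⁻ x, HH G p f g (n+1) x ∂ν := by
    rw [← lintegral_indicator hE]
    congr 1; ext x
    by_cases hx : x ∈ E
    · rw [indicator_of_mem hx]
    · rw [indicator_of_notMem hx]
      exact (le_antisymm (not_lt.1 hx) zero_le).symm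
  have h2 : ∫⁻ x in E, HH G p f g (n+1) x + g x ∂ν
      = ∫⁻ x in E, f x + Pop G p (HH G p f g n) x ∂ν := by
    refine setLIntegral_congr_fun hE fun x hx => ?_
    have hx : 0 < (f x + Pop G p (HH G p f g n) x) - g x := hx
    exact tsub_add_cancel_of_le (tsub_pos_iff_lt.1 hx).le
  refine (ENNReal.add_le_add_iff_left hfin).1 ?_
  calc ∫⁻ x, HH G p f g (n+1) x ∂ν + ∫⁻ x in E, g x ∂ν
      = ∫⁻ x in E, f x + Pop G p (HH G p f g n) x ∂ν := by
        rw [← h2, lintegral_add_left (hm _), h1]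
    _ ≤ ∫⁻ x, f x + Pop G p (HH G p f g n) x ∂ν := setLIntegral_le_lintegral _ _
    _ = ∫⁻ x, f x ∂ν + ∫⁻ x, HH G p f g n x ∂ν := by
        rw [lintegral_add_left hf, ← lint_TT hG (hm n), hT]
    _ ≤ ∫⁻ x, HH G p f g (n+1) x ∂ν + ∫⁻ x, f x ∂ν := by
        rw [add_comm]
        exact add_le_add (lintegral_mono fun x => HH_succ_le f g n x) le_rfl

theorem good (hS : Sys G p I) (hν : Erg G p ν) {f g : ℝ → ℝ≥0∞} (hf : Measurable f)
    (hg : Measurable g) (hgt : ∀ x, g x ≠ ⊤) (hlt : ∫⁻ x, f x ∂ν < ∫⁻ x, g x ∂ν) :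
    ∃ H : ℝ → ℝ≥0∞, Measurable H ∧ (∀ᵐ x ∂ν, H x ≠ ⊤) ∧
      ∀ n x, UU G p n f x ≤ UU G p n g x + H x := by
  have hfi : ∫⁻ x, f x ∂ν ≠ ⊤ := hlt.ne_top
  have hm := HH_meas (p := p) hS.hG hf hg
  have hHm : Measurable fun x => ⨆ n, HH G p f g n x := Measurable.iSup hm
  refine ⟨fun x => ⨆ n, HH G p f g n x, hHm, ?_,
    fun n x => (UU_le_HH f g n x).trans (add_le_add le_rfl (le_iSup (fun n => HH G p f g n x) n))⟩
  set H := fun x => ⨆ n, HH G p f g n x with hH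
  have hA : MeasurableSet {x | H x ≠ ⊤} := by
    have : {x | H x ≠ ⊤} = (H ⁻¹' {⊤})ᶜ := rfl
    rw [this]
    exact (hHm (measurableSet_singleton _)).compl
  have hfwd : ∀ x, f x + Pop G p H x ≤ H x + g x := by
    intro x
    rw [hH, Pop_iSup (HH_mono f g), ENNReal.add_iSup]
    refine iSup_le fun n => ?_
    calc f x + Pop G p (HH G p f g n) x ≤ HH G p f g (n+1) x + g x := le_tsub_add
      _ ≤ _ := add_le_add (le_iSup (fun n => HH G p f g n x) (n+1)) le_rfl
  have h := erg_fwd hS hν hA (fun i => by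
    have : {x | H x ≠ ⊤} ∩ G i ⁻¹' {x | H x ≠ ⊤}ᶜ = ∅ := by
      ext x
      simp only [mem_inter_iff, mem_empty_iff_false, iff_false, not_and]
      intro h1 h2
      have h1 : H x ≠ ⊤ := h1
      have h2 : H (G i x) = ⊤ := not_not.1 h2
      have h3 : Pop G p H x ≠ ⊤ :=
        ne_top_of_le_ne_top (ENNReal.add_ne_top.2 ⟨h1, hgt x⟩) (le_add_self.trans (hfwd x))
      apply h3
      refine top_le_iff.1 (le_trans ?_ (ENNReal.le_tsum i))
      rw [h2, ENNReal.mul_top (hS.hpos i).ne']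
    rw [this]; simp)
  refine h.resolve_left fun h0 => ?_
  have hE : ∀ n, MeasurableSet {x | 0 < HH G p f g n x} :=
    fun n => measurableSet_lt measurable_const (hm n)
  have hmon : Monotone fun n => {x | 0 < HH G p f g n x} := fun a b hab x hx =>
    lt_of_lt_of_le hx (HH_mono f g x hab)
  have h1 : ∫⁻ x, g x ∂ν ≤ ∫⁻ x, f x ∂ν := by
    have hac : ν.withDensity g ({x | H x ≠ ⊤}) = 0 := withDensity_absolutelyContinuous _ _ h0
    calc ∫⁻ x, g x ∂ν = ν.withDensity g univ := by
          rw [withDensity_apply _ MeasurableSet.univ, Measure.restrict_univ]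
      _ ≤ ν.withDensity g ({x | H x ≠ ⊤} ∪ ⋃ n, {x | 0 < HH G p f g n x}) := by
          refine measure_mono fun x _ => ?_
          by_cases hx : H x = ⊤
          · right
            have : 0 < H x := by rw [hx]; simp
            obtain ⟨n, hn⟩ := lt_iSup_iff.1 this
            exact mem_iUnion.2 ⟨n, hn⟩
          · exact Or.inl hx
      _ ≤ ν.withDensity g (⋃ n, {x | 0 < HH G p f g n x}) :=
          (measure_union_le _ _).trans (by rw [hac, zero_add])
      _ = ⨆ n, ν.withDensity g {x | 0 < HH G p f g n x} := hmon.measure_iUnion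
      _ ≤ ∫⁻ x, f x ∂ν := by
          refine iSup_le fun n => ?_
          refine (measure_mono (hmon (Nat.le_succ n))).trans ?_
          simp only
          rw [withDensity_apply _ (hE _)]
          exact HH_step hS.hG hν.inv hf hg hfi n
  exact absurd hlt (not_lt.2 h1)

/-- Path functional. -/
noncomputable def SF (G : ι → ℝ → ℝ) (p : ι → ℝ≥0∞) : ℕ → ((ℝ → ℝ) → ℝ≥0∞) → ℝ≥0∞
  | 0, _ => 0
  | n + 1, Φ => Φ id + ∑' i, p i * SF G p n (fun g => Φ (G i ∘ g))

theorem oph_id : IsOPH id := ⟨strictMono_id, surjective_id⟩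

theorem oph_comp {g h : ℝ → ℝ} (hg : IsOPH g) (hh : IsOPH h) : IsOPH (g ∘ h) :=
  ⟨hg.1.comp hh.1, hg.2.comp hh.2⟩

theorem SF_mono (hG : ∀ i, IsOPH (G i)) (n : ℕ) {Φ Ψ : (ℝ → ℝ) → ℝ≥0∞}
    (h : ∀ g, IsOPH g → Φ g ≤ Ψ g) : SF G p n Φ ≤ SF G p n Ψ := by
  induction n generalizing Φ Ψ with
  | zero => exact le_rfl
  | succ n ih =>
    exact add_le_add (h _ oph_id) (ENNReal.tsum_le_tsum fun i =>
      mul_le_mul_right (ih fun g hg => h _ (oph_comp (hG i) hg)) _)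

theorem SF_add (n : ℕ) (Φ Ψ : (ℝ → ℝ) → ℝ≥0∞) :
    SF G p n (fun g => Φ g + Ψ g) = SF G p n Φ + SF G p n Ψ := by
  induction n generalizing Φ Ψ with
  | zero => simp [SF]
  | succ n ih =>
    simp only [SF, ih, mul_add, ENNReal.tsum_add]
    ring

theorem SF_mul (n : ℕ) (c : ℝ≥0∞) (Φ : (ℝ → ℝ) → ℝ≥0∞) :
    SF G p n (fun g => c * Φ g) = c * SF G p n Φ := by
  induction n generalizing Φ with
  | zero => simp [SF]
  | succ n ih =>
    simp only [SF, ih, mul_add, ← ENNReal.tsum_mul_left]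
    congr 2; ext i; ring

theorem SF_sum {κ : Type*} (n : ℕ) (s : Finset κ) (Φ : κ → (ℝ → ℝ) → ℝ≥0∞) :
    SF G p n (fun g => ∑ k ∈ s, Φ k g) = ∑ k ∈ s, SF G p n (Φ k) := by
  classical
  induction s using Finset.induction_on with
  | empty =>
    have := SF_mul (G := G) (p := p) n 0 (fun _ => 0)
    simpa using this
  | insert a s ha ih =>
    simp only [Finset.sum_insert ha, SF_add, ih]

theorem UU_eq_SF (n : ℕ) (f : ℝ → ℝ≥0∞) (x : ℝ) :
    UU G p n f x = SF G p n (fun g => f (g x)) := by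
  induction n generalizing f with
  | zero => rfl
  | succ n ih =>
    rw [UU_succ']
    unfold Pop
    rw [UU_tsum]
    simp only [SF, ih]
    rfl

/-- Stopped indicator. -/
noncomputable def RR (G : ι → ℝ → ℝ) (p : ι → ℝ≥0∞) (ν : Measure ℝ) (δ : ℝ≥0∞) :
    ℕ → Set ℝ → ℝ → ℝ≥0∞
  | 0, _ => fun _ => 0
  | n + 1, J => fun x => open Classical in if ν J < δ then J.indicator 1 x
      else ∑' i, p i * RR G p ν δ n (G i ⁻¹' J) x

theorem RR_meas (hG : ∀ i, IsOPH (G i)) (δ : ℝ≥0∞) (n : ℕ) {J : Set ℝ} (hJ : MeasurableSet J) :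
    Measurable (RR G p ν δ n J) := by
  induction n generalizing J with
  | zero => exact measurable_const
  | succ n ih =>
    unfold RR
    by_cases h : ν J < δ
    · simp only [if_pos h]; exact measurable_one.indicator hJ
    · simp only [if_neg h]
      exact Measurable.tsum fun i => (ih ((oph_cont (hG i)).measurable hJ)).const_mul _

theorem RR_int (hG : ∀ i, IsOPH (G i)) (hp : ∑' i, p i = 1) (δ : ℝ≥0∞) (n : ℕ) {J : Set ℝ}
    (hJ : MeasurableSet J) : ∫⁻ x, RR G p ν δ n J x ∂ν ≤ δ := by
  induction n generalizing J with
  | zero => simp [RR]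
  | succ n ih =>
    unfold RR
    by_cases h : ν J < δ
    · simp only [if_pos h]; rw [lintegral_indicator_one hJ]; exact h.le
    · simp only [if_neg h]
      have hm : ∀ i, MeasurableSet (G i ⁻¹' J) := fun i => (oph_cont (hG i)).measurable hJ
      rw [lintegral_tsum fun i => ((RR_meas hG δ n (hm i)).const_mul _).aemeasurable]
      calc _ ≤ ∑' i, p i * δ := ENNReal.tsum_le_tsum fun i => by
            rw [lintegral_const_mul _ (RR_meas hG δ n (hm i))]
            exact mul_le_mul_right (ih (hm i)) _
        _ = δ := by rw [ENNReal.tsum_mul_right, hp, one_mul]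

theorem RR_succ_le (δ : ℝ≥0∞) (n : ℕ) (J : Set ℝ) (x : ℝ) :
    RR G p ν δ n J x ≤ RR G p ν δ (n+1) J x := by
  induction n generalizing J with
  | zero => exact zero_le
  | succ n ih =>
    rw [RR, RR]
    by_cases h : ν J < δ
    · simp only [if_pos h]; exact le_rfl
    · simp only [if_neg h]
      exact ENNReal.tsum_le_tsum fun i => mul_le_mul_right (ih _) _

theorem RR_mono (δ : ℝ≥0∞) (J : Set ℝ) (x : ℝ) : Monotone fun n => RR G p ν δ n J x :=
  monotone_nat_of_le_succ fun n => RR_succ_le δ n J x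

/-- Indicator of a bad visit. -/
noncomputable def bad (ν : Measure ℝ) (δ : ℝ≥0∞) (J : Set ℝ) (x : ℝ) (g : ℝ → ℝ) : ℝ≥0∞ :=
  open Classical in if g x ∈ J ∧ ν (g ⁻¹' J) < δ then 1 else 0

theorem bad_le_UU (hG : ∀ i, IsOPH (G i)) (δ : ℝ≥0∞) (n : ℕ) (J : Set ℝ) (x : ℝ) :
    SF G p n (bad ν δ J x) ≤ UU G p n (RR G p ν δ n J) x := by
  induction n generalizing J with
  | zero => exact zero_le
  | succ n ih =>
    by_cases h : ν J < δ
    · rw [UU_eq_SF]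
      refine SF_mono hG _ fun g hg => ?_
      simp only [RR, if_pos h, bad]
      split_ifs with hb
      · rw [indicator_of_mem hb.1]; exact le_rfl
      · exact zero_le
    · have e1 : SF G p (n+1) (bad ν δ J x) = ∑' i, p i * SF G p n (bad ν δ (G i ⁻¹' J) x) := by
        rw [SF]
        have : bad ν δ J x id = 0 := by
          simp only [bad]
          rw [if_neg]
          rintro ⟨_, h'⟩
          exact h h'
        rw [this, zero_add]
        rfl
      have e2 : RR G p ν δ (n+1) J = fun x => ∑' i, p i * RR G p ν δ n (G i ⁻¹' J) x := by
        ext x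
        simp only [RR, if_neg h]
      rw [e1, e2]
      refine le_trans ?_ (UU_succ_le _ _ _)
      rw [UU_tsum]
      exact ENNReal.tsum_le_tsum fun i => mul_le_mul_right (ih _) _

theorem UU_const_mul (c : ℝ≥0∞) (f : ℝ → ℝ≥0∞) (n : ℕ) (x : ℝ) :
    UU G p n (fun x => c * f x) x = c * UU G p n f x := by
  rw [UU_eq_SF, UU_eq_SF, SF_mul]

theorem bad_bound (hS : Sys G p I) (hν : Erg G p ν) {δ : ℝ≥0∞} (hδ : δ < 2⁻¹ * ν I) :
    ∃ H : ℝ → ℝ≥0∞, Measurable H ∧ (∀ᵐ x ∂ν, H x ≠ ⊤) ∧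
      ∀ n x, SF G p n (bad ν δ I x) ≤ 2⁻¹ * UU G p n (I.indicator 1) x + H x := by
  have hIm := hS.hI.measurableSet
  have hind : Measurable (I.indicator (1 : ℝ → ℝ≥0∞)) := measurable_one.indicator hIm
  obtain ⟨H, h1, h2, h3⟩ := good hS hν (f := fun x => ⨆ n, RR G p ν δ n I x)
    (g := fun x => 2⁻¹ * I.indicator 1 x) (Measurable.iSup fun n => RR_meas hS.hG δ n hIm)
    (hind.const_mul _) (fun x => by
      refine ENNReal.mul_ne_top (by simp) ?_
      by_cases hx : x ∈ I <;> simp [hx])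
    (by
      rw [lintegral_const_mul _ hind, lintegral_indicator_one hIm]
      refine lt_of_le_of_lt ?_ hδ
      rw [lintegral_iSup (fun n => RR_meas hS.hG δ n hIm) (fun a b hab x => RR_mono δ I x hab)]
      exact iSup_le fun n => RR_int hS.hG hS.hsum δ n hIm)
  refine ⟨H, h1, h2, fun n x => ?_⟩
  have h4 := h3 n x
  rw [UU_const_mul] at h4
  refine le_trans (bad_le_UU hS.hG δ n I x) (le_trans (UU_mono (fun y => ?_) n x) h4)
  exact le_iSup (fun n => RR G p ν δ n I y) n

theorem maxprin (hS : Sys G p I) (A : Set ℝ) (n : ℕ) (x : ℝ) :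
    UU G p n (A.indicator 1) x ≤ ⨆ y ∈ A, UU G p n (A.indicator 1) y := by
  induction n generalizing x with
  | zero => exact zero_le
  | succ n ih =>
    by_cases hx : x ∈ A
    · exact le_iSup₂ (f := fun y (_ : y ∈ A) => UU G p (n+1) (A.indicator 1) y) x hx
    · calc UU G p (n+1) (A.indicator 1) x = ∑' i, p i * UU G p n (A.indicator 1) (G i x) := by
            simp only [UU, indicator_of_notMem hx, zero_add, Pop]
        _ ≤ ∑' i, p i * ⨆ y ∈ A, UU G p n (A.indicator 1) y :=
            ENNReal.tsum_le_tsum fun i => mul_le_mul_right (ih _) _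
        _ = ⨆ y ∈ A, UU G p n (A.indicator 1) y := by
            rw [ENNReal.tsum_mul_right, hS.hsum, one_mul]
        _ ≤ _ := iSup₂_mono fun y _ => UU_succ_le _ _ _

theorem UU_le_nat (hS : Sys G p I) {f : ℝ → ℝ≥0∞} (hf : ∀ x, f x ≤ 1) (n : ℕ) (x : ℝ) :
    UU G p n f x ≤ n := by
  induction n generalizing x with
  | zero => exact zero_le
  | succ n ih =>
    calc UU G p (n+1) f x ≤ 1 + ∑' i, p i * (n : ℝ≥0∞) :=
          add_le_add (hf x) (ENNReal.tsum_le_tsum fun i => mul_le_mul_right (ih _) _)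
      _ = ((n+1 : ℕ) : ℝ≥0∞) := by
          rw [ENNReal.tsum_mul_right, hS.hsum, one_mul]; push_cast; ring

end F
end SDSProof

namespace SDSProof
section G
variable {ν ν₁ ν₂ : Measure ℝ}

theorem subsing_null (hat : ∀ x, ν {x} = 0) {s : Set ℝ} (hs : s.Subsingleton) : ν s = 0 := by
  rcases hs.eq_empty_or_singleton with h | ⟨x, h⟩
  · rw [h]; simp
  · rw [h]; exact hat x

theorem null_left (hat : ∀ x, ν {x} = 0) (c : ℝ) : ν {x | c < x ∧ ν (Ioo c x) = 0} = 0 := by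
  classical
  let N : ℚ → Set ℝ := fun q => if ν (Ioo c q) = 0 then Ioo c q else ∅
  have hN : ∀ q, ν (N q) = 0 := by
    intro q
    by_cases h : ν (Ioo c q) = 0
    · simp only [N, if_pos h]; exact h
    · simp only [N, if_neg h]; simp
  set M := {x | (c < x ∧ ν (Ioo c x) = 0) ∧ ∀ y, x < y → ν (Ioo c y) ≠ 0} with hM
  have hMs : M.Subsingleton := by
    rintro x ⟨⟨_, hx⟩, hx'⟩ y ⟨⟨_, hy⟩, hy'⟩
    rcases lt_trichotomy x y with h | h | h
    · exact (hx' y h hy).elim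
    · exact h
    · exact (hy' x h hx).elim
  refine measure_mono_null (t := (⋃ q, N q) ∪ M) ?_
    (measure_union_null (measure_iUnion_null hN) (subsing_null hat hMs))
  rintro x ⟨hx1, hx2⟩
  by_cases h : ∀ y, x < y → ν (Ioo c y) ≠ 0
  · exact Or.inr ⟨⟨hx1, hx2⟩, h⟩
  · left
    push Not at h
    obtain ⟨y, hxy, hy⟩ := h
    obtain ⟨q, hq1, hq2⟩ := exists_rat_btwn hxy
    have hq : ν (Ioo c q) = 0 := measure_mono_null (Ioo_subset_Ioo_right hq2.le) hy
    refine mem_iUnion.2 ⟨q, ?_⟩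
    simp only [N, if_pos hq]
    exact ⟨hx1, hq1⟩

theorem null_right (hat : ∀ x, ν {x} = 0) (d : ℝ) : ν {x | x < d ∧ ν (Ioo x d) = 0} = 0 := by
  classical
  let N : ℚ → Set ℝ := fun q => if ν (Ioo (q : ℝ) d) = 0 then Ioo (q : ℝ) d else ∅
  have hN : ∀ q, ν (N q) = 0 := by
    intro q
    by_cases h : ν (Ioo (q : ℝ) d) = 0
    · simp only [N, if_pos h]; exact h
    · simp only [N, if_neg h]; simp
  set M := {x | (x < d ∧ ν (Ioo x d) = 0) ∧ ∀ y, y < x → ν (Ioo y d) ≠ 0} with hM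
  have hMs : M.Subsingleton := by
    rintro x ⟨⟨_, hx⟩, hx'⟩ y ⟨⟨_, hy⟩, hy'⟩
    rcases lt_trichotomy x y with h | h | h
    · exact (hy' x h hx).elim
    · exact h
    · exact (hx' y h hy).elim
  refine measure_mono_null (t := (⋃ q, N q) ∪ M) ?_
    (measure_union_null (measure_iUnion_null hN) (subsing_null hat hMs))
  rintro x ⟨hx1, hx2⟩
  by_cases h : ∀ y, y < x → ν (Ioo y d) ≠ 0
  · exact Or.inr ⟨⟨hx1, hx2⟩, h⟩
  · left
    push Not at h
    obtain ⟨y, hxy, hy⟩ := h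
    obtain ⟨q, hq1, hq2⟩ := exists_rat_btwn hxy
    have hq : ν (Ioo (q : ℝ) d) = 0 := measure_mono_null (Ioo_subset_Ioo_left hq1.le) hy
    refine mem_iUnion.2 ⟨q, ?_⟩
    simp only [N, if_pos hq]
    exact ⟨hq2, hx1⟩

theorem exists_gen {s : Set ℝ} (hs : 0 < ν s) {P : ℝ → Prop} (hP : ∀ᵐ x ∂ν, P x) :
    ∃ x ∈ s, P x := by
  by_contra h
  push Not at h
  exact hs.ne' (measure_mono_null h hP)

theorem split (hat : ∀ x, ν {x} = 0) {c d : ℝ} (h : 0 < ν (Ioo c d)) :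
    ∃ e, c < e ∧ e < d ∧ 0 < ν (Ioo c e) ∧ 0 < ν (Ioo e d) := by
  have h1 : ∀ᵐ x ∂ν, ¬ (c < x ∧ ν (Ioo c x) = 0) ∧ ¬ (x < d ∧ ν (Ioo x d) = 0) := by
    have a1 : ∀ᵐ x ∂ν, ¬ (c < x ∧ ν (Ioo c x) = 0) := by
      rw [ae_iff]; simpa using null_left hat c
    have a2 : ∀ᵐ x ∂ν, ¬ (x < d ∧ ν (Ioo x d) = 0) := by
      rw [ae_iff]; simpa using null_right hat d
    exact a1.and a2
  obtain ⟨e, he, h2, h3⟩ := exists_gen h h1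
  exact ⟨e, he.1, he.2, pos_iff_ne_zero.2 fun h => h2 ⟨he.1, h⟩,
    pos_iff_ne_zero.2 fun h => h3 ⟨he.2, h⟩⟩

theorem split3 (hat : ∀ x, ν {x} = 0) {c d : ℝ} (h : 0 < ν (Ioo c d)) :
    ∃ e e', c < e ∧ e < e' ∧ e' < d ∧ 0 < ν (Ioo c e) ∧ 0 < ν (Ioo e e') ∧ 0 < ν (Ioo e' d) := by
  obtain ⟨e, h1, h2, h3, h4⟩ := split hat h
  obtain ⟨e', h5, h6, h7, h8⟩ := split hat h4
  exact ⟨e, e', h1, h5, h6, h3, h7, h8⟩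

theorem small_int (hr₁ : IsRadon ν₁) (hr₂ : IsRadon ν₂) (hat₁ : ∀ x, ν₁ {x} = 0)
    (hat₂ : ∀ x, ν₂ {x} = 0) {a b : ℝ} (h : 0 < ν₁ (Ioo a b)) {δ₁ δ₂ : ℝ≥0∞} (h1 : 0 < δ₁)
    (h2 : 0 < δ₂) : ∃ c d, Ioo c d ⊆ Ioo a b ∧ 0 < ν₁ (Ioo c d) ∧ ν₁ (Ioo c d) < δ₁ ∧
      ν₂ (Ioo c d) < δ₂ := by
  have := radon_fmc hr₁
  have := radon_fmc hr₂
  obtain ⟨x, hx, hxs⟩ := exists_mem_forall_mem_nhdsWithin_pos_measure h.ne'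
  obtain ⟨U₁, hU1, hU1o, hU1l⟩ := Set.exists_isOpen_lt_of_lt (μ := ν₁) {x} δ₁ (by rwa [hat₁])
  obtain ⟨U₂, hU2, hU2o, hU2l⟩ := Set.exists_isOpen_lt_of_lt (μ := ν₂) {x} δ₂ (by rwa [hat₂])
  have hU : U₁ ∩ U₂ ∩ Ioo a b ∈ 𝓝 x :=
    ((hU1o.inter hU2o).inter isOpen_Ioo).mem_nhds ⟨⟨hU1 rfl, hU2 rfl⟩, hx⟩
  obtain ⟨c, d, hcd, hsub⟩ := mem_nhds_iff_exists_Ioo_subset.1 hU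
  refine ⟨c, d, fun z hz => (hsub hz).2, hxs _ (mem_nhdsWithin_of_mem_nhds ?_), ?_, ?_⟩
  · exact Ioo_mem_nhds hcd.1 hcd.2
  · exact (measure_mono fun z hz => (hsub hz).1.1).trans_lt hU1l
  · exact (measure_mono fun z hz => (hsub hz).1.2).trans_lt hU2l

theorem cluster (hat₁ : ∀ x, ν₁ {x} = 0)
    (hs : ∀ c d, 0 < ν₁ (Ioo c d) → 0 < ν₂ (Ioo c d)) {P₁ P₂ : ℝ → Prop}
    (hP₁ : ∀ᵐ x ∂ν₁, P₁ x) (hP₂ : ∀ᵐ x ∂ν₂, P₂ x) (R : ℕ) :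
    ∀ c d : ℝ, 0 < ν₁ (Ioo c d) → ∃ x y x' : ℕ → ℝ,
      (∀ j < R, (c < x j ∧ x j < y j ∧ y j < x' j ∧ x' j < d) ∧ P₁ (x j) ∧ P₂ (y j) ∧ P₁ (x' j)) ∧
      ∀ g : ℝ → ℝ, Monotone g → ∀ lo hi : ℝ, lo ≤ hi →
        (∀ z ∈ Ioo c d, lo ≤ g z ∧ g z ≤ hi) →
        ∑ j ∈ Finset.range R, (g (y j) - g (x j)) ≤ hi - lo := by
  induction R with
  | zero =>
    intro c d _
    refine ⟨0, 0, 0, by simp, ?_⟩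
    intro g _ lo hi h _
    simpa using h
  | succ R ih =>
    intro c d hcd
    obtain ⟨e, h1, h2, h3, h4⟩ := split hat₁ hcd
    obtain ⟨s, s', q1, q2, q3, q4, q5, q6⟩ := split3 hat₁ h3
    obtain ⟨x0, hx0, hx0P⟩ := exists_gen q4 hP₁
    obtain ⟨y0, hy0, hy0P⟩ := exists_gen (hs _ _ q5) hP₂
    obtain ⟨z0, hz0, hz0P⟩ := exists_gen q6 hP₁
    obtain ⟨x, y, x', hc, hv⟩ := ih e d h4
    have hne : ∀ j < R, j ≠ R := fun j hj => by omega
    refine ⟨Function.update x R x0, Function.update y R y0, Function.update x' R z0, ?_, ?_⟩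
    · intro j hj
      by_cases hjR : j = R
      · subst hjR
        simp only [Function.update_self]
        exact ⟨⟨hx0.1, hx0.2.trans hy0.1, hy0.2.trans hz0.1, hz0.2.trans h2⟩, hx0P, hy0P, hz0P⟩
      · simp only [Function.update_of_ne hjR]
        obtain ⟨⟨k1, k2, k3, k4⟩, k5⟩ := hc j (by omega)
        exact ⟨⟨h1.trans k1, k2, k3, k4⟩, k5⟩
    · intro g hg lo hi hlh hz
      rw [Finset.sum_range_succ]
      simp only [Function.update_self]
      have e1 : ∑ j ∈ Finset.range R, (g (Function.update y R y0 j) - g (Function.update x R x0 j))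
          = ∑ j ∈ Finset.range R, (g (y j) - g (x j)) := by
        refine Finset.sum_congr rfl fun j hj => ?_
        have := hne j (Finset.mem_range.1 hj)
        rw [Function.update_of_ne this, Function.update_of_ne this]
      have e2 := hv g hg (g e) hi (hz e ⟨h1, h2⟩).2 (fun z hz' =>
        ⟨hg hz'.1.le, (hz z ⟨h1.trans hz'.1, hz'.2⟩).2⟩)
      have e3 : lo ≤ g x0 := (hz x0 ⟨hx0.1, by linarith [hx0.2]⟩).1
      have e4 : g y0 ≤ g e := hg (by linarith [hy0.2])
      rw [e1]
      linarith

/-- test function one -/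
noncomputable def F1 (I : Set ℝ) (φ : ℝ → ℝ≥0) : ℝ → ℝ≥0∞ :=
  I.indicator fun x => ((1 - φ x : ℝ≥0) : ℝ≥0∞)

/-- test function two -/
noncomputable def F2 (I : Set ℝ) (φ : ℝ → ℝ≥0) : ℝ → ℝ≥0∞ :=
  I.indicator fun x => (φ x : ℝ≥0∞)

theorem exists_phi (hr₁ : IsRadon ν₁) (hr₂ : IsRadon ν₂) (hsing : ν₁ ⟂ₘ ν₂) {I : Set ℝ}
    (hI : IsCompact I) {ε : ℝ≥0∞} (hε : ε ≠ 0) :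
    ∃ (φ : ℝ → ℝ≥0) (L : ℝ≥0), LipschitzWith L φ ∧ (∀ x, φ x ≤ 1) ∧
      ∫⁻ x, F1 I φ x ∂ν₁ < ε ∧ ∫⁻ x, F2 I φ x ∂ν₂ < ε := by
  have := radon_fmc hr₁
  have := radon_fmc hr₂
  obtain ⟨s, hs, hs1, hs2⟩ := hsing
  obtain ⟨C₁, hC1s, hC1, hC1l⟩ := (hI.measurableSet.inter hs.compl).exists_isCompact_sdiff_lt
    (μ := ν₁) ((measure_mono inter_subset_left).trans_lt (hr₁ I hI)).ne hε
  obtain ⟨C₂, hC2s, hC2, hC2l⟩ := (hI.measurableSet.inter hs).exists_isCompact_sdiff_lt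
    (μ := ν₂) ((measure_mono inter_subset_left).trans_lt (hr₂ I hI)).ne hε
  have hdis : Disjoint C₁ C₂ := Set.disjoint_left.2 fun x h1 h2 => (hC1s h1).2 (hC2s h2).2
  obtain ⟨δ, hδ, hd⟩ := hdis.exists_thickenings hC1 hC2.isClosed
  refine ⟨thickenedIndicator hδ C₁, _, lipschitzWith_thickenedIndicator hδ C₁,
    thickenedIndicator_le_one hδ C₁, ?_, ?_⟩
  · have hm : MeasurableSet (I \ C₁) := hI.measurableSet.diff hC1.measurableSet
    calc ∫⁻ x, F1 I (thickenedIndicator hδ C₁) x ∂ν₁ ≤ ∫⁻ x, (I \ C₁).indicator 1 x ∂ν₁ := by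
          refine lintegral_mono fun x => ?_
          by_cases hx : x ∈ I
          · rw [F1, indicator_of_mem hx]
            by_cases hx1 : x ∈ C₁
            · rw [thickenedIndicator_one hδ C₁ hx1]; simp
            · rw [indicator_of_mem (show x ∈ I \ C₁ from ⟨hx, hx1⟩)]
              simp
          · rw [F1, indicator_of_notMem hx]; exact zero_le
      _ = ν₁ (I \ C₁) := lintegral_indicator_one hm
      _ ≤ ν₁ (((I ∩ sᶜ) \ C₁) ∪ s) := by
          refine measure_mono ?_
          rintro x ⟨h1, h2⟩
          by_cases h : x ∈ s
          · exact Or.inr h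
          · exact Or.inl ⟨⟨h1, h⟩, h2⟩
      _ ≤ ν₁ ((I ∩ sᶜ) \ C₁) := (measure_union_le _ _).trans (by rw [hs1, add_zero])
      _ < ε := hC1l
  · have hm : MeasurableSet (I \ C₂) := hI.measurableSet.diff hC2.measurableSet
    calc ∫⁻ x, F2 I (thickenedIndicator hδ C₁) x ∂ν₂ ≤ ∫⁻ x, (I \ C₂).indicator 1 x ∂ν₂ := by
          refine lintegral_mono fun x => ?_
          by_cases hx : x ∈ I
          · rw [F2, indicator_of_mem hx]
            by_cases hx1 : x ∈ C₂
            · rw [thickenedIndicator_zero hδ C₁ fun h =>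
                Set.disjoint_left.1 hd h (Metric.self_subset_thickening hδ _ hx1)]
              simp
            · rw [indicator_of_mem (show x ∈ I \ C₂ from ⟨hx, hx1⟩)]
              simpa using thickenedIndicator_le_one hδ C₁ x
          · rw [F2, indicator_of_notMem hx]; exact zero_le
      _ = ν₂ (I \ C₂) := lintegral_indicator_one hm
      _ ≤ ν₂ (((I ∩ s) \ C₂) ∪ sᶜ) := by
          refine measure_mono ?_
          rintro x ⟨h1, h2⟩
          by_cases h : x ∈ s
          · exact Or.inl ⟨⟨h1, h⟩, h2⟩
          · exact Or.inr h
      _ ≤ ν₂ ((I ∩ s) \ C₂) := (measure_union_le _ _).trans (by rw [hs2, add_zero])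
      _ < ε := hC2l

theorem pair_ineq {I : Set ℝ} {φ : ℝ → ℝ≥0} {L : ℝ≥0} (hL : LipschitzWith L φ)
    (h1 : ∀ x, φ x ≤ 1) {u v : ℝ} (huv : u ≤ v) (hu : u ∈ I) (hv : v ∈ I) :
    1 ≤ ENNReal.ofReal (L * (v - u)) + (F1 I φ u + F2 I φ v) := by
  rw [F1, F2, indicator_of_mem hu, indicator_of_mem hv]
  have h2 : dist (φ u) (φ v) ≤ L * dist u v := hL.dist_le_mul u v
  rw [NNReal.dist_eq, Real.dist_eq, abs_sub_comm u v, abs_of_nonneg (sub_nonneg.2 huv)] at h2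
  have h3 := (abs_le.1 h2).2
  have h4 : (φ u : ℝ) ≤ 1 := by exact_mod_cast h1 u
  have e : ∀ z : ℝ≥0, (z : ℝ≥0∞) = ENNReal.ofReal (z : ℝ) := fun z => (ENNReal.ofReal_coe_nnreal).symm
  have hn : 0 ≤ (L : ℝ) * (v - u) := mul_nonneg L.2 (sub_nonneg.2 huv)
  rw [e, e, ← ENNReal.ofReal_add (by positivity) (by positivity), ← ENNReal.ofReal_add hn (by positivity),
    NNReal.coe_sub (h1 u), ← ENNReal.ofReal_one]
  refine ENNReal.ofReal_le_ofReal ?_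
  push_cast
  linarith

theorem cluster_ineq {a b c d : ℝ} (hab : a ≤ b) {φ : ℝ → ℝ≥0} {L : ℝ≥0} (hL : LipschitzWith L φ)
    (h1 : ∀ x, φ x ≤ 1) {R : ℕ} {x y : ℕ → ℝ}
    (hx : ∀ j < R, c < x j ∧ x j < y j ∧ y j < d)
    (hv : ∀ g : ℝ → ℝ, Monotone g → ∀ lo hi : ℝ, lo ≤ hi →
        (∀ z ∈ Ioo c d, lo ≤ g z ∧ g z ≤ hi) →
        ∑ j ∈ Finset.range R, (g (y j) - g (x j)) ≤ hi - lo)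
    {g : ℝ → ℝ} (hg : Monotone g) (hsub : Ioo c d ⊆ g ⁻¹' Icc a b) :
    (R : ℝ≥0∞) ≤ ENNReal.ofReal (L * (b - a)) +
      ∑ j ∈ Finset.range R, (F1 (Icc a b) φ (g (x j)) + F2 (Icc a b) φ (g (y j))) := by
  calc (R : ℝ≥0∞) = ∑ j ∈ Finset.range R, 1 := by simp
    _ ≤ ∑ j ∈ Finset.range R, (ENNReal.ofReal (L * (g (y j) - g (x j))) +
        (F1 (Icc a b) φ (g (x j)) + F2 (Icc a b) φ (g (y j)))) := by
        refine Finset.sum_le_sum fun j hj => ?_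
        obtain ⟨k1, k2, k3⟩ := hx j (Finset.mem_range.1 hj)
        exact pair_ineq hL h1 (hg k2.le) (hsub ⟨k1, k2.trans k3⟩) (hsub ⟨k1.trans k2, k3⟩)
    _ ≤ _ := by
        rw [Finset.sum_add_distrib]
        refine add_le_add ?_ le_rfl
        rw [← ENNReal.ofReal_sum_of_nonneg]
        · refine ENNReal.ofReal_le_ofReal ?_
          rw [← Finset.mul_sum]
          exact mul_le_mul_of_nonneg_left (hv g hg a b hab fun z hz => hsub hz) L.2
        · intro j hj
          obtain ⟨k1, k2, k3⟩ := hx j (Finset.mem_range.1 hj)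
          exact mul_nonneg L.2 (sub_nonneg.2 (hg k2.le))

end G
end SDSProof

namespace SDSProof
section F
variable {ι : Type*} [Countable ι] {G : ι → ℝ → ℝ} {p : ι → ℝ≥0∞}
variable {ν ν₁ ν₂ : Measure ℝ}

theorem three_pt {a b c d x y x' : ℝ} {δ : ℝ≥0∞} (h1 : c < x) (h2 : x < y) (h3 : y < x')
    (h4 : x' < d) (hδ : ν (Ioo c d) < δ) {g : ℝ → ℝ} (hg : IsOPH g) :
    (Icc a b).indicator (1 : ℝ → ℝ≥0∞) (g y) ≤ bad ν δ (Icc a b) y g +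
      ((Icc a b).indicator 1 (g x) + (Icc a b).indicator 1 (g x')) := by
  by_cases hy : g y ∈ Icc a b
  swap
  · rw [indicator_of_notMem hy]; exact zero_le
  by_cases hx : g x ∈ Icc a b
  · rw [indicator_of_mem hy, indicator_of_mem hx]
    exact le_add_of_le_right (le_add_of_nonneg_right zero_le)
  by_cases hx' : g x' ∈ Icc a b
  · rw [indicator_of_mem hy, indicator_of_mem hx']
    exact le_add_of_le_right (le_add_of_nonneg_left zero_le)
  have hxa : g x < a := by
    by_contra h
    exact hx ⟨not_lt.1 h, (hg.1 h2).le.trans hy.2⟩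
  have hxb : b < g x' := by
    by_contra h
    exact hx' ⟨hy.1.trans (hg.1 h3).le, not_lt.1 h⟩
  have hsub : g ⁻¹' Icc a b ⊆ Ioo c d := by
    intro z hz
    have e1 : x < z := hg.1.lt_iff_lt.1 (hxa.trans_le hz.1)
    have e2 : z < x' := hg.1.lt_iff_lt.1 (hz.2.trans_lt hxb)
    exact ⟨h1.trans e1, e2.trans h4⟩
  rw [indicator_of_mem hy, bad, if_pos ⟨hy, (measure_mono hsub).trans_lt hδ⟩]
  exact le_add_of_nonneg_right zero_le

theorem half_absorb {u v : ℝ≥0∞} (hu : u ≠ ⊤) (h : u ≤ 2⁻¹ * u + v) : u ≤ 2 * v := by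
  rcases eq_or_ne v ⊤ with rfl | hv
  · simp
  lift u to ℝ≥0 using hu
  lift v to ℝ≥0 using hv
  have e : (2⁻¹ : ℝ≥0∞) = ((2⁻¹ : ℝ≥0) : ℝ≥0∞) := by simp
  rw [e] at h
  have h' : u ≤ 2⁻¹ * u + v := by exact_mod_cast h
  have h'' : (u : ℝ) ≤ 2⁻¹ * u + v := by exact_mod_cast h'
  have : (u : ℝ) ≤ 2 * v := by linarith
  exact_mod_cast this

theorem ind_le_one (s : Set ℝ) (x : ℝ) : s.indicator (1 : ℝ → ℝ≥0∞) x ≤ 1 :=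
  indicator_le_self' (fun _ _ => zero_le) x

theorem three_UU {a b c d x y x' : ℝ} (hS : Sys G p (Icc a b)) {δ : ℝ≥0∞} {H : ℝ → ℝ≥0∞}
    (hH : ∀ n x, SF G p n (bad ν δ (Icc a b) x) ≤
      2⁻¹ * UU G p n ((Icc a b).indicator 1) x + H x)
    (h1 : c < x) (h2 : x < y) (h3 : y < x')
    (h4 : x' < d) (hδ : ν (Ioo c d) < δ) (n : ℕ) :
    UU G p n ((Icc a b).indicator 1) y ≤ 2 * (H y + (UU G p n ((Icc a b).indicator 1) x +
      UU G p n ((Icc a b).indicator 1) x')) := by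
  refine half_absorb (ne_top_of_le_ne_top (ENNReal.natCast_ne_top n)
    (UU_le_nat hS (ind_le_one _) n y)) ?_
  rw [← add_assoc]
  refine le_trans ?_ (add_le_add (hH n y) le_rfl)
  rw [UU_eq_SF n _ y, UU_eq_SF n _ x, UU_eq_SF n _ x', ← SF_add, ← SF_add]
  exact SF_mono hS.hG n fun g hg => three_pt h1 h2 h3 h4 hδ hg

theorem cluster_sum {R : ℕ} {x y x' : ℕ → ℝ} {aa f1 f2 : ℕ → ℝ → ℝ≥0∞} {A : ℕ → ℝ≥0∞}
    {H' H2 H3 H4 : ℝ → ℝ≥0∞} {C l t : ℝ≥0∞} (hl : l ≠ ⊤) (hlC : l * C = t)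
    (ha : ∀ n x, aa n x ≤ C * A n + H' x)
    (hf1 : ∀ n x, f1 n x ≤ l * aa n x + H3 x) (hf2 : ∀ n x, f2 n x ≤ l * aa n x + H4 x)
    (hy : ∀ n, ∀ j < R, aa n (y j) ≤ 2 * (H2 (y j) + (aa n (x j) + aa n (x' j))))
    (hf : ∀ j < R, (H' (x j) ≠ ⊤ ∧ H3 (x j) ≠ ⊤) ∧ (H2 (y j) ≠ ⊤ ∧ H4 (y j) ≠ ⊤) ∧
      H' (x' j) ≠ ⊤ ∧ H3 (x' j) ≠ ⊤) :
    ∃ K : ℝ≥0∞, K ≠ ⊤ ∧ ∀ n, ∑ j ∈ Finset.range R, (f1 n (x j) + f2 n (y j)) ≤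
      R * (5 * t * A n) + K := by
  refine ⟨∑ j ∈ Finset.range R, (l * H' (x j) + H3 (x j) +
    (l * (2 * (H2 (y j) + (H' (x j) + H' (x' j)))) + H4 (y j))), ?_, fun n => ?_⟩
  · refine ENNReal.sum_ne_top.2 fun j hj => ?_
    obtain ⟨⟨q1, q2⟩, ⟨q3, q4⟩, q5, q6⟩ := hf j (Finset.mem_range.1 hj)
    have h2 : (2 : ℝ≥0∞) ≠ ⊤ := by simp
    refine ENNReal.add_ne_top.2 ⟨ENNReal.add_ne_top.2 ⟨ENNReal.mul_ne_top hl q1, q2⟩,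
      ENNReal.add_ne_top.2 ⟨ENNReal.mul_ne_top hl (ENNReal.mul_ne_top h2 (ENNReal.add_ne_top.2
        ⟨q3, ENNReal.add_ne_top.2 ⟨q1, q5⟩⟩)), q4⟩⟩
  · have e : (R : ℝ≥0∞) * (5 * t * A n) = ∑ j ∈ Finset.range R, 5 * t * A n := by
      rw [Finset.sum_const, Finset.card_range, nsmul_eq_mul]
    rw [e, ← Finset.sum_add_distrib]
    refine Finset.sum_le_sum fun j hj => ?_
    have hyj := hy n j (Finset.mem_range.1 hj)
    calc f1 n (x j) + f2 n (y j)
        ≤ (l * (C * A n + H' (x j)) + H3 (x j)) + (l * (2 * (H2 (y j) + ((C * A n + H' (x j)) +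
          (C * A n + H' (x' j))))) + H4 (y j)) := by
          refine add_le_add ((hf1 n _).trans (add_le_add (mul_le_mul_right (ha n _) _) le_rfl))
            ((hf2 n _).trans (add_le_add (mul_le_mul_right (hyj.trans (mul_le_mul_right
              (add_le_add le_rfl (add_le_add (ha n _) (ha n _))) _)) _) le_rfl))
      _ = _ := by rw [← hlC]; ring

theorem point_ineq {a b c e1 e2 d q : ℝ} (hab : a ≤ b) {δ V S1 S2 : ℝ≥0∞} {R : ℝ≥0∞}
    (hδ : ν (Ioo c d) < δ) (hq : q ∈ Ioo e1 e2) (hce : c < e1) (hed : e2 < d)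
    {g : ℝ → ℝ} (hg : IsOPH g)
    (hl : Ioo c e1 ⊆ g ⁻¹' Icc a b → R ≤ V + S1) (hr : Ioo e2 d ⊆ g ⁻¹' Icc a b → R ≤ V + S2) :
    R * (Icc a b).indicator (1 : ℝ → ℝ≥0∞) (g q) ≤ R * bad ν δ (Icc a b) q g +
      (V * (Icc a b).indicator 1 (g q) + (S1 + S2)) := by
  by_cases hqI : g q ∈ Icc a b
  swap
  · rw [indicator_of_notMem hqI]; simp
  rw [indicator_of_mem hqI]
  by_cases hb : ν (g ⁻¹' Icc a b) < δ
  · rw [bad, if_pos ⟨hqI, hb⟩]; simp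
  rw [bad, if_neg (fun h => hb h.2)]
  simp only [Pi.one_apply, mul_one, mul_zero, zero_add]
  have : ¬ g ⁻¹' Icc a b ⊆ Ioo c d := fun h => hb ((measure_mono h).trans_lt hδ)
  obtain ⟨z, hz, hz'⟩ := not_subset.1 this
  by_cases hzc : z ≤ c
  · refine (hl fun w hw => ?_).trans (add_le_add le_rfl (le_add_of_nonneg_right zero_le))
    exact ⟨hz.1.trans (hg.1.monotone (hzc.trans hw.1.le)),
      (hg.1.monotone (hw.2.le.trans hq.1.le)).trans hqI.2⟩
  · have hzd : d ≤ z := by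
      by_contra h
      exact hz' ⟨not_le.1 hzc, not_le.1 h⟩
    refine (hr fun w hw => ?_).trans (add_le_add le_rfl (le_add_of_nonneg_left zero_le))
    exact ⟨hqI.1.trans (hg.1.monotone (hq.2.le.trans hw.1.le)),
      (hg.1.monotone (hw.2.le.trans hzd)).trans hz.2⟩

theorem final_arith {R h n : ℕ} {A V K1 K2 : ℝ≥0∞} (hR : 1 ≤ R) (hA : A ≤ n) (hV : 16 * V ≤ R)
    (hK1 : K1 ≠ ⊤) (hK2 : K2 ≠ ⊤)
    (hle : R * A ≤ R * (2⁻¹ * A + h) + (V * A + ((R * (5 * 160⁻¹ * A) + K1) +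
      (R * (5 * 160⁻¹ * A) + K2)))) : A ≤ 3 * (R * h + K1 + K2) := by
  have hAt : A ≠ ⊤ := ne_top_of_le_ne_top (ENNReal.natCast_ne_top n) hA
  have hVt : V ≠ ⊤ := by
    rintro rfl
    rw [ENNReal.mul_top (by simp)] at hV
    exact absurd (top_le_iff.1 hV) (ENNReal.natCast_ne_top R)
  lift A to ℝ≥0 using hAt
  lift V to ℝ≥0 using hVt
  lift K1 to ℝ≥0 using hK1
  lift K2 to ℝ≥0 using hK2
  have e : (2⁻¹ : ℝ≥0∞) = ((2⁻¹ : ℝ≥0) : ℝ≥0∞) := by simp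
  have e' : (160⁻¹ : ℝ≥0∞) = ((160⁻¹ : ℝ≥0) : ℝ≥0∞) := by simp
  rw [e, e'] at hle
  have hle1 : (R : ℝ≥0) * A ≤ R * (2⁻¹ * A + h) + (V * A + ((R * (5 * 160⁻¹ * A) + K1) +
      (R * (5 * 160⁻¹ * A) + K2))) := by exact_mod_cast hle
  have hle2 : (R : ℝ) * A ≤ R * (2⁻¹ * A + h) + (V * A + ((R * (5 * 160⁻¹ * A) + K1) +
      (R * (5 * 160⁻¹ * A) + K2))) := by exact_mod_cast hle1
  have hV1 : 16 * V ≤ (R : ℝ≥0) := by exact_mod_cast hV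
  have hV2 : 16 * (V : ℝ) ≤ R := by exact_mod_cast hV1
  have hR2 : (1 : ℝ) ≤ R := by exact_mod_cast hR
  have hA0 : (0 : ℝ) ≤ A := A.2
  have h1 : (A : ℝ) ≤ R * A := by nlinarith
  have h2 : 16 * ((V : ℝ) * A) ≤ R * A := by nlinarith
  have hK10 : (0 : ℝ) ≤ K1 := K1.2
  have hK20 : (0 : ℝ) ≤ K2 := K2.2
  have hRh : (0 : ℝ) ≤ R * h := by positivity
  have h3 : (A : ℝ) ≤ 3 * (R * h + K1 + K2) := by nlinarith
  have h4 : A ≤ 3 * (R * h + K1 + K2) := by exact_mod_cast h3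
  exact_mod_cast h4

theorem F_meas {I : Set ℝ} (hI : MeasurableSet I) {φ : ℝ → ℝ≥0} (hφ : Continuous φ) :
    Measurable (F1 I φ) ∧ Measurable (F2 I φ) := by
  refine ⟨Measurable.indicator ?_ hI, Measurable.indicator ?_ hI⟩
  · exact (measurable_const.sub hφ.measurable).coe_nnreal_ennreal
  · exact hφ.measurable.coe_nnreal_ennreal

theorem good_ind {I B : Set ℝ} (hS : Sys G p I) (hν : Erg G p ν) {f : ℝ → ℝ≥0∞}
    (hf : Measurable f) (hB : MeasurableSet B) {c : ℝ≥0∞} (hc : c ≠ ⊤)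
    (hlt : ∫⁻ x, f x ∂ν < c * ν B) : ∃ H : ℝ → ℝ≥0∞, Measurable H ∧ (∀ᵐ x ∂ν, H x ≠ ⊤) ∧
      ∀ n x, UU G p n f x ≤ c * UU G p n (B.indicator 1) x + H x := by
  have hind : Measurable (B.indicator (1 : ℝ → ℝ≥0∞)) := measurable_one.indicator hB
  obtain ⟨H, h1, h2, h3⟩ := good hS hν (f := f) (g := fun x => c * B.indicator 1 x) hf
    (hind.const_mul _) (fun x => ENNReal.mul_ne_top hc
      (ne_top_of_le_ne_top (by simp) (ind_le_one B x)))
    (by rw [lintegral_const_mul _ hind, lintegral_indicator_one hB]; exact hlt)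
  refine ⟨H, h1, h2, fun n x => ?_⟩
  rw [← UU_const_mul]
  exact h3 n x

theorem not_sing {a b : ℝ} (hS : Sys G p (Icc a b)) (h1 : Erg G p ν₁) (h2 : Erg G p ν₂)
    (hat₁ : ∀ x, ν₁ {x} = 0) (hat₂ : ∀ x, ν₂ {x} = 0) (hpos : 0 < ν₁ (Ioo a b))
    (hs : ∀ c d, 0 < ν₁ (Ioo c d) → 0 < ν₂ (Ioo c d)) (hsing : ν₁ ⟂ₘ ν₂) : False := by
  have hab : a ≤ b := by
    by_contra h
    rw [Ioo_eq_empty (fun h' => h h'.le)] at hpos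
    simp at hpos
  have hI1 : 0 < ν₁ (Icc a b) := hpos.trans_le (measure_mono Ioo_subset_Icc_self)
  have hI2 : 0 < ν₂ (Icc a b) := (hs _ _ hpos).trans_le (measure_mono Ioo_subset_Icc_self)
  have hf1 := h1.rad (Icc a b) isCompact_Icc
  have hf2 := h2.rad (Icc a b) isCompact_Icc
  have hquart : (4⁻¹ : ℝ≥0∞) < 2⁻¹ := by
    rw [ENNReal.inv_lt_inv]; norm_num
  have hδ : ∀ m : ℝ≥0∞, 0 < m → m < ⊤ → 0 < 4⁻¹ * m ∧ 4⁻¹ * m < 2⁻¹ * m := fun m hm hm' =>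
    ⟨ENNReal.mul_pos (by simp) hm.ne', (ENNReal.mul_lt_mul_iff_left hm.ne' hm'.ne).2 hquart⟩
  obtain ⟨hd1, hd1'⟩ := hδ _ hI1 hf1
  obtain ⟨hd2, hd2'⟩ := hδ _ hI2 hf2
  obtain ⟨H, Hm, Hf, hH⟩ := bad_bound hS h1 hd1'
  obtain ⟨H2, -, H2f, hH2⟩ := bad_bound hS h2 hd2'
  obtain ⟨c, d, hcd, hc0, hc1, hc2⟩ := small_int h1.rad h2.rad hat₁ hat₂ hpos hd1 hd2
  obtain ⟨e1, e2, hce, hee, hed, hp1, hp2, hp3⟩ := split3 hat₁ hc0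
  obtain ⟨h, hh⟩ : ∃ h : ℕ, 0 < ν₁ (Ioo e1 e2 ∩ {x | H x ≤ h}) := by
    by_contra hcon
    push Not at hcon
    have hU : ν₁ (⋃ h : ℕ, Ioo e1 e2 ∩ {x | H x ≤ h}) = 0 :=
      measure_iUnion_null fun h => le_antisymm (hcon h) zero_le
    obtain ⟨z, hz, hz1, hz2⟩ := exists_gen hp2 (Hf.and (measure_eq_zero_iff_ae_notMem.1 hU))
    refine hz2 (mem_iUnion.2 ?_)
    obtain ⟨k, hk⟩ := ENNReal.exists_nat_gt hz1
    exact ⟨k, hz, hk.le⟩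
  set G0 := Ioo e1 e2 ∩ {x | H x ≤ h} with hG0
  have hG0m : MeasurableSet G0 := measurableSet_Ioo.inter (measurableSet_le Hm measurable_const)
  have hIoo : Ioo e1 e2 ⊆ Ioo a b := (Ioo_subset_Ioo hce.le hed.le).trans hcd
  have hG0I : G0 ⊆ Icc a b := inter_subset_left.trans (hIoo.trans Ioo_subset_Icc_self)
  have hG0f : ν₁ G0 ≠ ⊤ := ((measure_mono hG0I).trans_lt hf1).ne
  set I := Icc a b with hIdef
  set C : ℝ≥0∞ := 2 * ν₁ I / ν₁ G0 with hC
  have hCt : C ≠ ⊤ := ENNReal.div_ne_top (ENNReal.mul_ne_top (by simp) hf1.ne) hh.ne'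
  have hC0 : C ≠ 0 := by
    rw [hC]
    exact (ENNReal.div_pos (mul_ne_zero (by simp) hI1.ne') hG0f).ne'
  have hIm : MeasurableSet I := measurableSet_Icc
  have hind : Measurable (I.indicator (1 : ℝ → ℝ≥0∞)) := measurable_one.indicator hIm
  obtain ⟨H', -, H'f, hH'⟩ := good_ind (c := C) hS h1 hind hG0m hCt (by
    rw [lintegral_indicator_one hIm, hC, ENNReal.div_mul_cancel hh.ne' hG0f, two_mul]
    exact ENNReal.lt_add_right hf1.ne hI1.ne')
  set A : ℕ → ℝ≥0∞ := fun n => ⨆ y ∈ G0, UU G p n (I.indicator 1) y with hA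
  have ha : ∀ n x, UU G p n (I.indicator 1) x ≤ C * A n + H' x := by
    intro n x
    refine (hH' n x).trans (add_le_add (mul_le_mul_right ((maxprin hS G0 n x).trans
      (iSup₂_mono fun y _ => UU_mono (fun z => ?_) n y)) _) le_rfl)
    exact indicator_le_indicator_of_subset hG0I (fun _ => zero_le) z
  set l : ℝ≥0∞ := 160⁻¹ * C⁻¹ with hl
  have hlt : l ≠ ⊤ := ENNReal.mul_ne_top (by simp) (by simpa using hC0)
  have hl0 : l ≠ 0 := mul_ne_zero (by simp) (by simpa using hCt)
  have hlC : l * C = 160⁻¹ := by rw [hl, mul_assoc, ENNReal.inv_mul_cancel hC0 hCt, mul_one]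
  obtain ⟨φ, L, hL, hφ, hφ1, hφ2⟩ := exists_phi h1.rad h2.rad hsing hS.hI
    (ε := min (l * ν₁ I) (l * ν₂ I))
    (ne_of_gt (lt_min (ENNReal.mul_pos hl0 hI1.ne') (ENNReal.mul_pos hl0 hI2.ne')))
  obtain ⟨F1m, F2m⟩ := F_meas hIm hL.continuous
  obtain ⟨H3, -, H3f, hH3⟩ := good_ind hS h1 F1m hIm hlt (hφ1.trans_le (min_le_left _ _))
  obtain ⟨H4, -, H4f, hH4⟩ := good_ind hS h2 F2m hIm hlt (hφ2.trans_le (min_le_right _ _))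
  set V := ENNReal.ofReal (L * (b - a)) with hV
  obtain ⟨R0, hR0⟩ := ENNReal.exists_nat_gt (r := 16 * V)
    (ENNReal.mul_ne_top (by simp) ENNReal.ofReal_ne_top)
  obtain ⟨R, hR1, hRV⟩ : ∃ R : ℕ, 1 ≤ R ∧ 16 * V ≤ R :=
    ⟨R0 + 1, by omega, hR0.le.trans (by exact_mod_cast Nat.le_succ R0)⟩
  have hP1 := H'f.and H3f
  have hP2 := H2f.and H4f
  obtain ⟨x, y, x', hx, hv⟩ := cluster hat₁ hs hP1 hP2 R c e1 hp1
  obtain ⟨u, w, u', hu, hv'⟩ := cluster hat₁ hs hP1 hP2 R e2 d hp3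
  obtain ⟨K1, hK1, hK1'⟩ := cluster_sum (R := R) (x := x) (y := y) (x' := x') (H2 := H2)
    hlt hlC ha hH3 hH4
    (fun n j hj => by
      obtain ⟨⟨q1, q2, q3, q4⟩, -⟩ := hx j hj
      exact three_UU hS hH2 q1 q2 q3 (q4.trans (hee.trans hed)) hc2 n)
    (fun j hj => (hx j hj).2)
  obtain ⟨K2, hK2, hK2'⟩ := cluster_sum (R := R) (x := u) (y := w) (x' := u') (H2 := H2)
    hlt hlC ha hH3 hH4
    (fun n j hj => by
      obtain ⟨⟨q1, q2, q3, q4⟩, -⟩ := hu j hj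
      exact three_UU hS hH2 ((hce.trans hee).trans q1) q2 q3 q4 hc2 n)
    (fun j hj => (hu j hj).2)
  have key : ∀ n, ∀ q ∈ G0, R * UU G p n (I.indicator 1) q ≤
      R * (2⁻¹ * UU G p n (I.indicator 1) q + h) + (V * UU G p n (I.indicator 1) q +
        ((R * (5 * 160⁻¹ * A n) + K1) + (R * (5 * 160⁻¹ * A n) + K2))) := by
    intro n q hq
    have hb : SF G p n (bad ν₁ (4⁻¹ * ν₁ I) I q) ≤ 2⁻¹ * UU G p n (I.indicator 1) q + h :=
      (hH n q).trans (add_le_add le_rfl hq.2)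
    refine le_trans ?_ (add_le_add (mul_le_mul_right hb _)
      (add_le_add le_rfl (add_le_add (hK1' n) (hK2' n))))
    simp only [UU_eq_SF, ← SF_add, ← SF_sum, ← SF_mul]
    refine SF_mono hS.hG n fun g hg => ?_
    refine point_ineq hab hc1 hq.1 hce hed hg (fun hsub => ?_) (fun hsub => ?_)
    · exact cluster_ineq hab hL hφ (fun j hj => by
        obtain ⟨⟨q1, q2, q3, q4⟩, -⟩ := hx j hj
        exact ⟨q1, q2, q3.trans q4⟩) hv hg.1.monotone hsub
    · exact cluster_ineq hab hL hφ (fun j hj => by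
        obtain ⟨⟨q1, q2, q3, q4⟩, -⟩ := hu j hj
        exact ⟨q1, q2, q3.trans q4⟩) hv' hg.1.monotone hsub
  have hAb : ∀ n, A n ≤ 3 * (R * h + K1 + K2) := by
    intro n
    refine final_arith (n := n) hR1 (iSup₂_le fun q hq => UU_le_nat hS (ind_le_one _) n q)
      hRV hK1 hK2 ?_
    have hAn : A n = ⨆ q ∈ G0, UU G p n (I.indicator 1) q := rfl
    conv_lhs => rw [hAn, ENNReal.mul_iSup]
    refine iSup_le fun q => ?_
    rw [ENNReal.mul_iSup]
    refine iSup_le fun hq => (key n q hq).trans ?_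
    have hqA : UU G p n (I.indicator 1) q ≤ A n :=
      le_iSup₂ (f := fun q (_ : q ∈ G0) => UU G p n (I.indicator 1) q) q hq
    exact add_le_add (mul_le_mul_right (add_le_add (mul_le_mul_right hqA _) le_rfl) _)
      (add_le_add (mul_le_mul_right hqA _) le_rfl)
  obtain ⟨q, hq⟩ := nonempty_of_measure_ne_zero hh.ne'
  have htop := hS.hrec q
  have hle : ⨆ n, UU G p n (I.indicator 1) q ≤ 3 * (R * h + K1 + K2) :=
    iSup_le fun n => le_trans
      (le_iSup₂ (f := fun q (_ : q ∈ G0) => UU G p n (I.indicator 1) q) q hq) (hAb n)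
  rw [htop] at hle
  refine absurd (top_le_iff.1 hle) (ENNReal.mul_ne_top (by simp) (ENNReal.add_ne_top.2
    ⟨ENNReal.add_ne_top.2 ⟨ENNReal.mul_ne_top (by simp) (by simp), hK1⟩, hK2⟩))

end F
end SDSProof


/-- **Theorem.** Under conditions (R) and (U), if `ν₁, ν₂` are ergodic invariant Radon
measures with `supp ν₁ ⊆ supp ν₂` and `supp ν₁` not discrete (it has an accumulation
point), then `ν₁ = C • ν₂` for some constant `C > 0`. -/
theorem ergodic_measures_nested_support_proportional
    {ι : Type*} [Countable ι] [MeasurableSpace ι]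
    (G : ι → ℝ → ℝ) (hG : ∀ i, IsOPH (G i))
    (μm : Measure ι) [IsProbabilityMeasure μm] (hpos : ∀ i, 0 < μm {i})
    (Q : Measure (ℕ → ι)) (hQ : IsProd μm Q)
    (hR : CondR G Q) (hU : CondU G)
    (ν₁ ν₂ : Measure ℝ)
    (hrad₁ : IsRadon ν₁) (herg₁ : IsErg G μm ν₁)
    (hrad₂ : IsRadon ν₂) (herg₂ : IsErg G μm ν₂)
    (hsupp : msupp ν₁ ⊆ msupp ν₂)
    (hacc : ∃ x : ℝ, AccPt x (𝓟 (msupp ν₁))) :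
    ∃ C : ℝ≥0, 0 < C ∧ ν₁ = C • ν₂ := by
  have hne : ∀ ν : Measure ℝ, (∃ x : ℝ, AccPt x (𝓟 (msupp ν))) → ν ≠ 0 := by
    rintro ν ⟨x, hx⟩ rfl
    rw [accPt_iff_nhds] at hx
    obtain ⟨y, ⟨-, hy⟩, -⟩ := hx univ univ_mem
    simpa using hy univ isOpen_univ (mem_univ _)
  have hacc₂ : ∃ x : ℝ, AccPt x (𝓟 (msupp ν₂)) := by
    obtain ⟨x, hx⟩ := hacc
    exact ⟨x, hx.mono (principal_mono.2 hsupp)⟩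
  have h10 := hne _ hacc
  have h20 := hne _ hacc₂
  obtain ⟨a0, b0, hab0, hR0⟩ := hR
  obtain ⟨k, hk⟩ := SDSProof.exists_Icc_pos h10
  obtain ⟨a, b, hsub, hpos₁⟩ : ∃ a b : ℝ, Icc a0 b0 ⊆ Icc a b ∧ 0 < ν₁ (Ioo a b) := by
    refine ⟨min a0 (-k) - 1, max b0 k + 1, Icc_subset_Icc ?_ ?_,
      (pos_iff_ne_zero.2 hk).trans_le (measure_mono fun z hz => ⟨?_, ?_⟩)⟩
    · linarith [min_le_left a0 (-k : ℝ)]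
    · linarith [le_max_left b0 (k : ℝ)]
    · linarith [min_le_right a0 (-k : ℝ), hz.1]
    · linarith [le_max_right b0 (k : ℝ), hz.2]
  have hR1 : ∀ x : ℝ, ∀ᵐ ω ∂Q, ∃ᶠ n in atTop, chain G ω x n ∈ Icc a b := fun x => by
    filter_upwards [hR0 x] with ω hω
    exact hω.mono fun n hn => hsub hn
  have hT₁ := SDSProof.inv_TT hG hrad₁ herg₁.1 h10
  have hT₂ := SDSProof.inv_TT hG hrad₂ herg₂.1 h20
  have hsum := SDSProof.sum_one hpos hG hQ isCompact_Icc hR1 hrad₁ hT₁ h10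
  have hι : Nonempty ι := by
    by_contra h
    rw [not_nonempty_iff] at h
    simp at hsum
  obtain ⟨i0⟩ := hι
  have hQ1 : Q univ = 1 := by
    have := hQ 0 (fun _ => i0)
    simpa using this
  have hS : SDSProof.Sys G (fun i => μm {i}) (Icc a b) :=
    ⟨hG, hpos, hsum, isCompact_Icc, fun x => by
      have := SDSProof.recur hQ univ (by simp [hQ1]) (Icc a b) x (hR1 x)
      rwa [indicator_univ] at this⟩
  have mk : ∀ ν : Measure ℝ, IsRadon ν → IsErg G μm ν →
      SDSProof.TT G (fun i => μm {i}) ν = ν → SDSProof.Erg G (fun i => μm {i}) ν :=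
    fun ν hr he hT => ⟨hr, hT, fun A hA hTA => he.2 A hA
      (SDSProof.TT_inv hG (SDSProof.radon_le hr Measure.restrict_le_self) hTA)⟩
  have e1 := mk _ hrad₁ herg₁ hT₁
  have e2 := mk _ hrad₂ herg₂ hT₂
  have hs : ∀ c d, 0 < ν₁ (Ioo c d) → 0 < ν₂ (Ioo c d) := by
    intro c d hcd
    obtain ⟨x, hx, hxs⟩ := exists_mem_forall_mem_nhdsWithin_pos_measure hcd.ne'
    refine hsupp (?_ : x ∈ msupp ν₁) _ isOpen_Ioo hx
    intro U hU hxU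
    exact hxs U (mem_nhdsWithin_of_mem_nhds (hU.mem_nhds hxU))
  rcases SDSProof.prop_or_sing hS e1 e2 h10 h20 with h | h
  · exact h
  · exact (SDSProof.not_sing hS e1 e2 (SDSProof.atomless hS e1 hacc)
      (SDSProof.atomless hS e2 hacc₂) hpos₁ hs h).elim
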